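/- Let q be an odd prime power and let f ∈ F_q[X] be a polynomial whose formal derivative f′ is not a constant polynomial. If G has an absolutely irreducible factor over F_q, then f is not exceptional planar. -/

import Mathlib

open Polynomial

/-- A function on a field of odd characteristic is planar if for every nonzero `ε`
the map `x ↦ f (x + ε) - f x` is a bijection. -/
def IsPlanarOdd {F : Type} [Field F] (f : F → F) : Prop :=
  ∀ ε : F, ε ≠ 0 → Function.Bijective (fun x : F => f (x + ε) - f x)

/-- A polynomial over a finite field `K` (of odd order) is exceptional planar if for
infinitely many positive integers `r` it induces a planar function on the extension
of `K` of degree `r`. -/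
def IsExceptionalPlanarOdd {K : Type} [Field K] [Fintype K] (f : K[X]) : Prop :=
  Set.Infinite {r : ℕ | 0 < r ∧ ∀ (L : Type) [Field L] [Fintype L] [Algebra K L],
      Fintype.card L = Fintype.card K ^ r →
      IsPlanarOdd (fun x : L => Polynomial.aeval x f)}

/-!
A zero `(x, y, z)` of `G` over an extension `L` of `K` with `x ≠ y` and `x ≠ z` exhibits two points
at which the difference of `f` in the direction `x - y` takes the same value, so `f` is not planar
on `L`. An absolutely irreducible factor `g` of `G` cannot be `X₀ - X₁` or `X₀ - X₂` up to a
constant: the square of that linear form would divide `f(X₀) - f(X₁) - f(X₂) + f(-X₀ + X₁ + X₂)`,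
and differentiating in `X₀` at suitable points would make `f'` constant. It remains to find zeros
of `g` off these two planes over all sufficiently large extensions.

For this the surface `g = 0` is cut with a pencil `z = a(x) + w m(x)`. The generic member is
irreducible because the pencil is inverted by `w = (z - a) / m`. It has a smooth point, where `m`
vanishes, that does not move with `w`. Along the formal branch through that point the low-degree
monomials are linearly independent, a condition on a nonvanishing minor, so it persists for almost
all `w` and keeps the member irreducible. A rational point on an absolutely irreducible plane curve
is found by Stepanov's method: an auxiliary polynomial not divisible by the equation of the curve
but vanishing at all points with rational `x` and irrational `y` has too small a degree for all
points over rational `x` to be irrational.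
-/

section CoeffDegree

/-- The bivariate polynomials all of whose coefficients, as polynomials in the inner variable, have
degree at most `B`. -/
def coeffDegreeLE (R : Type*) [CommRing R] (B : ℕ) : Submodule R R[X][X] where
  carrier := {W | ∀ i, (W.coeff i).natDegree ≤ B}
  zero_mem' _ := by simp
  add_mem' hV hW i := by
    rw [coeff_add]
    exact (natDegree_add_le _ _).trans (max_le (hV i) (hW i))
  smul_mem' r W hW i := by
    rw [coeff_smul]
    exact (natDegree_smul_le r _).trans (hW i)

section CommRing

variable {R : Type*} [CommRing R] {B B' D n : ℕ} {V W P : R[X][X]}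

theorem coeffDegreeLE_mono (h : B ≤ B') : coeffDegreeLE R B ≤ coeffDegreeLE R B' :=
  fun _ hW i => (hW i).trans h

theorem monomial_mem_coeffDegreeLE {u : R[X]} (hu : u.natDegree ≤ B) :
    monomial n u ∈ coeffDegreeLE R B := fun i => by
  rw [coeff_monomial]
  split_ifs
  exacts [hu, by simp]

theorem C_mul_mem_coeffDegreeLE {u : R[X]} (hu : u.natDegree ≤ B) (hW : W ∈ coeffDegreeLE R B') :
    C u * W ∈ coeffDegreeLE R (B + B') := fun i => by
  rw [coeff_C_mul]
  exact natDegree_mul_le_of_le hu (hW i)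

theorem exists_mem_coeffDegreeLE (W : R[X][X]) : ∃ B, W ∈ coeffDegreeLE R B := by
  refine ⟨W.support.sup fun i => (W.coeff i).natDegree, fun i => ?_⟩
  by_cases hi : i ∈ W.support
  · exact Finset.le_sup (f := fun i => (W.coeff i).natDegree) hi
  · simp [notMem_support_iff.mp hi]

theorem map_mem_coeffDegreeLE {S : Type*} [CommRing S] (φ : R →+* S)
    (hW : W ∈ coeffDegreeLE R B) : W.map (mapRingHom φ) ∈ coeffDegreeLE S B := fun i => by
  rw [coeff_map]
  exact natDegree_map_le.trans (hW i)

theorem coeff_coeff_swap (W : R[X][X]) (i j : ℕ) :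
    ((Bivariate.swap W).coeff i).coeff j = (W.coeff j).coeff i := by
  induction W using Polynomial.induction_on' with
  | add V W hV hW => simp [hV, hW]
  | monomial n u =>
    simp only [Bivariate.swap_monomial, X_pow_eq_monomial, coeff_mul_C, coeff_map,
      coeff_C_mul, coeff_monomial]
    split_ifs <;> simp

theorem mem_coeffDegreeLE_iff_natDegree_swap :
    W ∈ coeffDegreeLE R B ↔ (Bivariate.swap W).natDegree ≤ B := by
  simp only [natDegree_le_iff_coeff_eq_zero, Polynomial.ext_iff, coeff_zero, coeff_coeff_swap]
  exact (forall_congr' fun i => natDegree_le_iff_coeff_eq_zero).trans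
    ⟨fun h i hi j => h j i hi, fun h j i hi => h i hi j⟩

theorem mul_mem_coeffDegreeLE (hV : V ∈ coeffDegreeLE R B) (hW : W ∈ coeffDegreeLE R B') :
    V * W ∈ coeffDegreeLE R (B + B') := by
  rw [mem_coeffDegreeLE_iff_natDegree_swap] at *
  rw [map_mul]
  exact natDegree_mul_le_of_le hV hW

theorem modByMonic_eq_sub_of_natDegree_le [Nontrivial R] {W P : R[X]} (hP : P.Monic)
    (hW : W.natDegree ≤ P.natDegree) : W %ₘ P = W - C (W.coeff P.natDegree) * P := by
  rw [← div_modByMonic_unique (C (W.coeff P.natDegree)) (W - C (W.coeff P.natDegree) * P) hP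
    ⟨by ring, ?_⟩ |>.2]
  refine (degree_lt_iff_coeff_zero _ _).2 ?_ |>.trans_eq (degree_eq_natDegree hP.ne_zero).symm
  intro m hm
  rcases hm.eq_or_lt with rfl | hlt
  · simp [hP.coeff_natDegree]
  · simp [coeff_eq_zero_of_natDegree_lt (hW.trans_lt hlt), coeff_eq_zero_of_natDegree_lt hlt]

theorem X_mul_mem_coeffDegreeLE (hW : W ∈ coeffDegreeLE R B) : X * W ∈ coeffDegreeLE R B
  | 0 => by simp
  | i + 1 => by simpa using hW i

theorem X_pow_modByMonic_mem_coeffDegreeLE (hP : P.Monic) (hPD : P ∈ coeffDegreeLE R D)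
    (n : ℕ) : X ^ n %ₘ P ∈ coeffDegreeLE R (n * D) := by
  nontriviality R
  by_cases hP1 : P = 1
  · simp [hP1]
  induction n with
  | zero =>
    have hlt : (1 : R[X][X]).degree < P.degree := by
      rw [degree_one, ← natDegree_pos_iff_degree_pos]
      exact Nat.pos_of_ne_zero fun h => hP1 (hP.natDegree_eq_zero.mp h)
    rw [pow_zero, (modByMonic_eq_self_iff hP).mpr hlt]
    exact monomial_mem_coeffDegreeLE (n := 0) (u := 1) (by simp)
  | succ n ih =>
    have hdeg : (X * (X ^ n %ₘ P)).natDegree ≤ P.natDegree :=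
      natDegree_mul_le_of_le natDegree_X_le le_rfl |>.trans <| by
        rw [add_comm]
        exact natDegree_modByMonic_lt _ hP hP1
    have hmod : X ^ (n + 1) %ₘ P = X * (X ^ n %ₘ P) %ₘ P :=
      modByMonic_eq_of_dvd_sub hP ⟨X * (X ^ n /ₘ P), by
        rw [modByMonic_eq_sub_mul_div]
        ring⟩
    have hX := X_mul_mem_coeffDegreeLE ih
    rw [hmod, modByMonic_eq_sub_of_natDegree_le hP hdeg]
    refine Submodule.sub_mem _ (coeffDegreeLE_mono (by gcongr; omega) hX) ?_
    rw [Nat.succ_mul]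
    exact C_mul_mem_coeffDegreeLE (hX _) hPD

theorem modByMonic_mem_coeffDegreeLE (hP : P.Monic) (hPD : P ∈ coeffDegreeLE R D)
    (hW : W ∈ coeffDegreeLE R B) (hn : W.natDegree ≤ n) :
    W %ₘ P ∈ coeffDegreeLE R (B + n * D) := by
  rw [W.as_sum_range_C_mul_X_pow' (Nat.lt_succ_of_le hn), ← modByMonicHom_apply, map_sum]
  refine Submodule.sum_mem _ fun i hi => ?_
  rw [modByMonicHom_apply, ← smul_eq_C_mul, smul_modByMonic, smul_eq_C_mul]
  exact coeffDegreeLE_mono (by gcongr; exact Nat.lt_succ_iff.mp (Finset.mem_range.mp hi))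
    (C_mul_mem_coeffDegreeLE (hW i) (X_pow_modByMonic_mem_coeffDegreeLE hP hPD i))

end CommRing

theorem mem_coeffDegreeLE_of_dvd {R : Type*} [CommRing R] [IsDomain R] {B : ℕ} {V W : R[X][X]}
    (hVW : V ∣ W) (hW0 : W ≠ 0) (hW : W ∈ coeffDegreeLE R B) : V ∈ coeffDegreeLE R B := by
  rw [mem_coeffDegreeLE_iff_natDegree_swap] at hW ⊢
  exact (natDegree_le_of_dvd (map_dvd Bivariate.swap hVW) (by simpa using hW0)).trans hW

end CoeffDegree

section BoxPolynomials

variable {R : Type*} [CommRing R] {l d : ℕ}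

/-- The bivariate polynomial of degree at most `l` in the inner and less than `d` in the outer
variable whose coefficients are the entries of a matrix. -/
noncomputable def bivariateOfCoeffs (R : Type*) [CommRing R] (l d : ℕ) :
    (Fin (l + 1) × Fin d → R) →ₗ[R] R[X][X] :=
  Fintype.linearCombination R fun i => monomial (i.2 : ℕ) (monomial (i.1 : ℕ) 1)

theorem coeff_coeff_bivariateOfCoeffs (v : Fin (l + 1) × Fin d → R) (i : Fin (l + 1)) (j : Fin d) :
    ((bivariateOfCoeffs R l d v).coeff j).coeff i = v (i, j) := by
  simp [bivariateOfCoeffs, Fintype.linearCombination_apply, coeff_monomial, Fintype.sum_prod_type,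
    Fin.val_inj]

theorem bivariateOfCoeffs_injective : Function.Injective (bivariateOfCoeffs R l d) := by
  rintro v w h
  ext ⟨i, j⟩
  rw [← coeff_coeff_bivariateOfCoeffs v, h, coeff_coeff_bivariateOfCoeffs]

theorem bivariateOfCoeffs_mem_coeffDegreeLE (v : Fin (l + 1) × Fin d → R) :
    bivariateOfCoeffs R l d v ∈ coeffDegreeLE R l :=
  Submodule.sum_mem _ fun i _ => Submodule.smul_mem _ _ <| monomial_mem_coeffDegreeLE <|
    (natDegree_monomial_le _).trans (Nat.lt_succ_iff.mp i.1.2)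

theorem degree_bivariateOfCoeffs_lt (v : Fin (l + 1) × Fin d → R) :
    (bivariateOfCoeffs R l d v).degree < d := by
  rw [← mem_degreeLT, bivariateOfCoeffs, Fintype.linearCombination_apply]
  refine Submodule.sum_mem _ fun i _ => ?_
  rw [← algebraMap_smul R[X] (v i)]
  refine Submodule.smul_mem _ _ (mem_degreeLT.mpr ((degree_monomial_le _ _).trans_lt ?_))
  exact_mod_cast i.2.2

theorem exists_bivariateOfCoeffs_eq {W : R[X][X]} (hW : W ∈ coeffDegreeLE R l)
    (hd : W.degree < d) : ∃ v, bivariateOfCoeffs R l d v = W := by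
  refine ⟨fun i => (W.coeff i.2).coeff i.1, Polynomial.ext fun j => Polynomial.ext fun i => ?_⟩
  by_cases hj : j < d
  · by_cases hi : i < l + 1
    · exact coeff_coeff_bivariateOfCoeffs _ ⟨i, hi⟩ ⟨j, hj⟩
    · rw [coeff_eq_zero_of_natDegree_lt, coeff_eq_zero_of_natDegree_lt]
      exacts [(hW j).trans_lt (by omega),
        (bivariateOfCoeffs_mem_coeffDegreeLE _ j).trans_lt (by omega)]
  · have hdj : (d : WithBot ℕ) ≤ j := by exact_mod_cast not_lt.mp hj
    rw [coeff_eq_zero_of_degree_lt (hd.trans_le hdj),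
      coeff_eq_zero_of_degree_lt ((degree_bivariateOfCoeffs_lt _).trans_le hdj)]

end BoxPolynomials

section Resultant

theorem resultant_ne_zero_of_irreducible {A : Type*} [CommRing A] [IsDomain A] [IsGCDMonoid A]
    {H B : A[X]} (hH : Irreducible H) (hd : H.natDegree ≠ 0) (hHB : ¬ H ∣ B) :
    resultant H B ≠ 0 := by
  have hprim := hH.isPrimitive hd
  have hinj := FaithfulSMul.algebraMap_injective A (FractionRing A)
  have hcop : IsCoprime (H.map (algebraMap A (FractionRing A)))
      (B.map (algebraMap A (FractionRing A))) :=
    (hprim.irreducible_iff_irreducible_map_fraction_map.mp hH).coprime_iff_not_dvd.mpr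
      fun h => hHB (hprim.dvd_of_fraction_map_dvd_fraction_map h)
  have hres : resultant (H.map (algebraMap A (FractionRing A)))
      (B.map (algebraMap A (FractionRing A))) ≠ 0 := by
    rw [Ne, resultant_eq_zero_iff]
    exact fun h => h.2 hcop
  rw [natDegree_map_eq_of_injective hinj, natDegree_map_eq_of_injective hinj,
    resultant_map_map] at hres
  exact fun h => hres (by rw [h, map_zero])

theorem exists_mul_add_mul_eq_C_of_irreducible {A : Type*} [CommRing A] [IsDomain A]
    [IsGCDMonoid A] {H B : A[X]} (hH : Irreducible H) (hd : H.natDegree ≠ 0) (hHB : ¬ H ∣ B) :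
    ∃ (b : A) (u v : A[X]), b ≠ 0 ∧ H * u + B * v = C b := by
  obtain ⟨u, v, -, -, h⟩ := exists_mul_add_mul_eq_C_resultant H B le_rfl le_rfl (.inl hd)
  exact ⟨_, u, v, resultant_ne_zero_of_irreducible hH hd hHB, h⟩

theorem natDegree_resultant_le {R : Type*} [CommRing R] {P V : R[X][X]} {D l : ℕ}
    (hP : P ∈ coeffDegreeLE R D) (hV : V ∈ coeffDegreeLE R l) (m n : ℕ) :
    (resultant P V m n).natDegree ≤ m * l + n * D := by
  rw [resultant, Matrix.det_apply]
  refine natDegree_sum_le_of_forall_le _ _ fun σ _ => (natDegree_smul_le _ _).trans ?_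
  rw [Fin.prod_univ_add]
  refine natDegree_mul_le_of_le
    ((natDegree_prod_le _ _).trans ((Finset.sum_le_card_nsmul _ _ l fun i _ => ?_).trans (by simp)))
    ((natDegree_prod_le _ _).trans ((Finset.sum_le_card_nsmul _ _ D fun i _ => ?_).trans (by simp)))
  · simp only [sylvester, Matrix.of_apply, Fin.addCases_left]
    split_ifs
    exacts [hV _, by simp]
  · simp only [sylvester, Matrix.of_apply, Fin.addCases_right]
    split_ifs
    exacts [hP _, by simp]

end Resultant

section Branches

variable {R : Type*} [CommRing R]

/-- Evaluation of a bivariate polynomial along the formal arc `(x₀ + t, Y(t))`. -/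
noncomputable def evalBranch (x₀ : R) (Y : PowerSeries R) : R[X][X] →ₐ[R] PowerSeries R :=
  aevalAeval (PowerSeries.C x₀ + PowerSeries.X) Y

theorem evalBranch_C (x₀ : R) (Y : PowerSeries R) (u : R[X]) :
    evalBranch x₀ Y (C u) = (taylor x₀ u : R[X]) := by
  rw [evalBranch, aevalAeval_C, taylor_apply, comp, ← coeToPowerSeries.ringHom_apply, hom_eval₂]
  simp [aeval_def, eval₂_eq_sum_range, add_comm]

theorem eval_map_aeval_eq_evalBranch (x₀ : R) (Y : PowerSeries R) (W : R[X][X]) :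
    (W.map (aeval (PowerSeries.C x₀ + PowerSeries.X) : R[X] →ₐ[R] PowerSeries R).toRingHom).eval Y =
      evalBranch x₀ Y W := by
  rw [eval_map]
  suffices eval₂RingHom (aeval (PowerSeries.C x₀ + PowerSeries.X) :
      R[X] →ₐ[R] PowerSeries R).toRingHom Y = evalBranch x₀ Y from DFunLike.congr_fun this W
  ext <;> simp [evalBranch]

theorem constantCoeff_evalBranch (x₀ : R) (Y : PowerSeries R) (W : R[X][X]) :
    PowerSeries.constantCoeff (evalBranch x₀ Y W) =
      W.evalEval x₀ (PowerSeries.constantCoeff Y) := by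
  suffices (PowerSeries.constantCoeff (R := R)).comp (evalBranch x₀ Y : R[X][X] →+* PowerSeries R) =
      evalEvalRingHom x₀ (PowerSeries.constantCoeff Y) from DFunLike.congr_fun this W
  ext <;> simp [evalBranch]

theorem map_evalBranch {S : Type*} [CommRing S] (φ : R →+* S) (x₀ : R) (Y : PowerSeries R)
    (W : R[X][X]) : PowerSeries.map φ (evalBranch x₀ Y W) =
      evalBranch (φ x₀) (PowerSeries.map φ Y) (W.map (mapRingHom φ)) := by
  suffices (PowerSeries.map φ).comp (evalBranch x₀ Y : R[X][X] →+* PowerSeries R) =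
      (evalBranch (φ x₀) (PowerSeries.map φ Y) : S[X][X] →+* PowerSeries S).comp
        (mapRingHom (mapRingHom φ)) from DFunLike.congr_fun this W
  ext <;> simp [evalBranch]

theorem exists_evalBranch_eq_zero {P : R[X][X]} (hP : P.Monic) {x₀ y₀ : R}
    (h0 : P.evalEval x₀ y₀ = 0) (h1 : IsUnit (P.derivative.evalEval x₀ y₀)) :
    ∃ Y, evalBranch x₀ Y P = 0 := by
  obtain ⟨Y, hY, -⟩ := HenselianRing.is_henselian
    (I := Ideal.span {(PowerSeries.X : PowerSeries R)}) _
    (hP.map (aeval (PowerSeries.C x₀ + PowerSeries.X) : R[X] →ₐ[R] PowerSeries R).toRingHom)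
    (PowerSeries.C y₀)
    (by
      rw [eval_map_aeval_eq_evalBranch, Ideal.mem_span_singleton, PowerSeries.X_dvd_iff,
        constantCoeff_evalBranch, PowerSeries.constantCoeff_C, h0])
    (by
      rw [derivative_map, eval_map_aeval_eq_evalBranch]
      refine (PowerSeries.isUnit_iff_constantCoeff.mpr ?_).map _
      rwa [constantCoeff_evalBranch, PowerSeries.constantCoeff_C])
  exact ⟨Y, by rwa [← eval_map_aeval_eq_evalBranch]⟩

theorem eq_zero_of_X_pow_dvd_evalBranch_C {x₀ : R} {Y : PowerSeries R} {u : R[X]} {n : ℕ}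
    (hu : u.natDegree < n) (h : PowerSeries.X ^ n ∣ evalBranch x₀ Y (C u)) : u = 0 := by
  rw [evalBranch_C, PowerSeries.X_pow_dvd_iff] at h
  refine taylor_injective x₀ (Polynomial.ext fun m => ?_)
  rw [map_zero, coeff_zero]
  by_cases hm : m < n
  · simpa using h m hm
  · exact coeff_eq_zero_of_natDegree_lt (by rw [natDegree_taylor]; omega)

-- The resultant of `P` and `V` lies in the ideal `(P, V)`, so its order at `x₀` is at least that
-- of `V`, while its degree is bounded.
theorem eq_zero_of_X_pow_dvd_evalBranch [IsDomain R] [UniqueFactorizationMonoid R] {x₀ : R}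
    {Y : PowerSeries R} {P V : R[X][X]} {D l : ℕ} (hP : Irreducible P) (hPD : P ∈ coeffDegreeLE R D)
    (hY : evalBranch x₀ Y P = 0) (hVd : V.degree < P.natDegree) (hV : V ∈ coeffDegreeLE R l)
    (h : PowerSeries.X ^ (P.natDegree * (D + l) + 1) ∣ evalBranch x₀ Y V) : V = 0 := by
  by_contra hV0
  have hlt : V.natDegree < P.natDegree := (natDegree_lt_iff_degree_lt hV0).mpr hVd
  have hPV : ¬ P ∣ V := fun hdvd => (natDegree_le_of_dvd hdvd hV0).not_gt hlt
  obtain ⟨u, v, -, -, huv⟩ := exists_mul_add_mul_eq_C_resultant P V le_rfl le_rfl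
    (.inl (Nat.ne_zero_of_lt hlt))
  refine resultant_ne_zero_of_irreducible hP (Nat.ne_zero_of_lt hlt) hPV
    (eq_zero_of_X_pow_dvd_evalBranch_C (x₀ := x₀) (Y := Y)
      (n := P.natDegree * (D + l) + 1) ?_ ?_)
  · refine Nat.lt_succ_of_le ((natDegree_resultant_le hPD hV _ _).trans ?_)
    rw [mul_add, add_comm]
    gcongr
  · rw [← huv, map_add, map_mul, map_mul, hY, zero_mul, zero_add]
    exact h.mul_right _

theorem evalBranch_bivariateOfCoeffs {l d : ℕ} (x₀ : R) (Y : PowerSeries R)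
    (v : Fin (l + 1) × Fin d → R) : evalBranch x₀ Y (bivariateOfCoeffs R l d v) =
      ∑ i, v i • evalBranch x₀ Y (monomial (i.2 : ℕ) (monomial (i.1 : ℕ) 1)) := by
  simp only [bivariateOfCoeffs, Fintype.linearCombination_apply, map_sum, map_smul]

theorem linearIndependent_evalBranch_monomial [IsDomain R] [UniqueFactorizationMonoid R] {x₀ : R}
    {Y : PowerSeries R} {P : R[X][X]} (hP : Irreducible P) (hY : evalBranch x₀ Y P = 0) (l : ℕ) :
    LinearIndependent R fun i : Fin (l + 1) × Fin P.natDegree =>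
      evalBranch x₀ Y (monomial (i.2 : ℕ) (monomial (i.1 : ℕ) 1)) := by
  obtain ⟨D, hPD⟩ := exists_mem_coeffDegreeLE P
  refine Fintype.linearIndependent_iff.mpr fun v hv => ?_
  rw [← evalBranch_bivariateOfCoeffs] at hv
  have hzero := eq_zero_of_X_pow_dvd_evalBranch hP hPD hY (degree_bivariateOfCoeffs_lt v)
    (bivariateOfCoeffs_mem_coeffDegreeLE v) (hv ▸ dvd_zero _)
  exact congrFun (bivariateOfCoeffs_injective (hzero.trans (map_zero _).symm))

end Branches

section FrobeniusTwist

variable {k : Type*} [Field k] (p : ℕ) [ExpChar k p] {ι : Type*} [Fintype ι] {n : ℕ}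
  {U : Submodule k (PowerSeries k)} {s c : ι → PowerSeries k}

theorem X_pow_mul_sum_shift_add_sum_constantCoeff (s c : ι → PowerSeries k) (n : ℕ) :
    ∑ i, c i * s i ^ p ^ n =
      PowerSeries.X ^ p ^ n *
          ∑ i, c i * (PowerSeries.mk fun j => PowerSeries.coeff (j + 1) (s i)) ^ p ^ n +
        ∑ i, PowerSeries.coeff 0 (s i) ^ p ^ n • c i := by
  have : ExpChar (PowerSeries k) p := expChar_of_injective_ringHom PowerSeries.C_injective p
  rw [Finset.mul_sum, ← Finset.sum_add_distrib]
  refine Finset.sum_congr rfl fun i _ => ?_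
  conv_lhs => rw [PowerSeries.eq_X_mul_shift_add_const (s i), add_pow_expChar_pow, mul_pow]
  rw [PowerSeries.smul_eq_C_mul, map_pow, PowerSeries.coeff_zero_eq_constantCoeff_apply]
  ring

theorem sum_coeff_pow_smul_eq_zero (hU : ∀ v ∈ U, PowerSeries.X ^ p ^ n ∣ v → v = 0)
    (hc : ∀ i, c i ∈ U) (h : ∑ i, c i * s i ^ p ^ n = 0) (m : ℕ) :
    ∑ i, PowerSeries.coeff m (s i) ^ p ^ n • c i = 0 := by
  have hconst : ∀ {s : ι → PowerSeries k}, ∑ i, c i * s i ^ p ^ n = 0 →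
      ∑ i, PowerSeries.coeff 0 (s i) ^ p ^ n • c i = 0 := fun h => by
    rw [X_pow_mul_sum_shift_add_sum_constantCoeff] at h
    refine hU _ (Submodule.sum_mem _ fun i _ => Submodule.smul_mem _ _ (hc i)) ?_
    rw [eq_neg_of_add_eq_zero_right h, dvd_neg]
    exact dvd_mul_right _ _
  induction m generalizing s with
  | zero => exact hconst h
  | succ m ih =>
    have hshift := h
    rw [X_pow_mul_sum_shift_add_sum_constantCoeff, hconst h, add_zero] at hshift
    simpa using ih ((mul_eq_zero.mp hshift).resolve_left (pow_ne_zero _ PowerSeries.X_ne_zero))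

theorem eq_zero_of_sum_mul_pow_eq_zero [PerfectRing k p] (hs : LinearIndependent k s)
    (hU : ∀ v ∈ U, PowerSeries.X ^ p ^ n ∣ v → v = 0) (hc : ∀ i, c i ∈ U)
    (h : ∑ i, c i * s i ^ p ^ n = 0) (i : ι) : c i = 0 := by
  ext j
  let root := (iterateFrobeniusEquiv k p n).symm
  have hroot : ∀ a, root a ^ p ^ n = a := fun a => (iterateFrobeniusEquiv k p n).apply_symm_apply a
  have hsum : ∑ i, root (PowerSeries.coeff j (c i)) • s i = 0 := by
    ext m
    rw [map_sum, map_zero, ← pow_eq_zero_iff (pow_ne_zero n (expChar_pos k p).ne'),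
      sum_pow_char_pow]
    simpa [mul_pow, hroot, mul_comm] using
      congrArg (PowerSeries.coeff j) (sum_coeff_pow_smul_eq_zero p hU hc h m)
  have := Fintype.linearIndependent_iff.mp hs _ hsum i
  rwa [map_eq_zero_iff root root.injective] at this

end FrobeniusTwist

section LinearIndependence

theorem exists_det_ne_zero_of_linearIndependent {R ι κ : Type*} [CommRing R] [IsDomain R]
    [Fintype ι] [DecidableEq ι] {s : ι → κ → R} (hs : LinearIndependent R s) :
    ∃ c : ι → κ, (Matrix.of fun i j => s i (c j)).det ≠ 0 := by
  let K := FractionRing R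
  have hinj := FaithfulSMul.algebraMap_injective R K
  let col : κ → ι → K := fun j i => algebraMap R K (s i j)
  have hK : LinearIndependent K fun i j => col j i := by
    rw [← LinearIndependent.iff_fractionRing (R := R)]
    exact hs.map_injOn (((Algebra.linearMap R K).compLeft κ)) (hinj.comp_left.injOn)
  have hspan : Submodule.span K (Set.range col) = ⊤ := by
    by_contra h
    obtain ⟨φ, hφ, hker⟩ := Submodule.exists_dual_map_eq_bot_of_lt_top (lt_top_iff_ne_top.mpr h)
      inferInstance
    refine hφ (LinearMap.pi_ext' fun i => LinearMap.ext_ring ?_)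
    refine Fintype.linearIndependent_iff.mp hK (fun i => φ (Pi.single i 1)) (funext fun j => ?_) i
    have hj : φ (col j) = 0 := (Submodule.eq_bot_iff _).mp hker _
      (Submodule.mem_map_of_mem (Submodule.subset_span ⟨j, rfl⟩))
    rw [← (Pi.basisFun K ι).sum_repr (col j), map_sum] at hj
    simpa [mul_comm] using hj
  obtain ⟨b, hb, -, hli⟩ := Submodule.exists_fun_fin_finrank_span_eq K (Set.range col)
  choose c hc using hb
  obtain rfl : b = col ∘ c := funext fun i => (hc i).symm
  have hcard : Fintype.card ι = Module.finrank K (Submodule.span K (Set.range col)) := by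
    rw [hspan, finrank_top, Module.finrank_fintype_fun_eq_card]
  let e := Fintype.equivFinOfCardEq hcard
  have hunit : IsUnit (Matrix.of fun i j => col (c (e j)) i) := by
    rw [← Matrix.linearIndependent_cols_iff_isUnit]
    exact hli.comp e e.injective
  refine ⟨c ∘ e, fun h => (Matrix.isUnit_iff_isUnit_det _).mp hunit |>.ne_zero ?_⟩
  rw [← map_zero (algebraMap R K), ← h, RingHom.map_det]
  rfl

theorem exists_ne_zero_forall_linearIndependent_map {R S ι : Type*} [CommRing R] [IsDomain R]
    [CommRing S] [IsDomain S] [Finite ι] {s : ι → PowerSeries R} (hs : LinearIndependent R s) :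
    ∃ δ : R, δ ≠ 0 ∧ ∀ φ : R →+* S, φ δ ≠ 0 →
      LinearIndependent S fun i => PowerSeries.map φ (s i) := by
  classical
  have := Fintype.ofFinite ι
  have hcoeff : LinearIndependent R fun i n => PowerSeries.coeff n (s i) :=
    hs.map_injOn (LinearMap.pi fun n => PowerSeries.coeff n) fun _ _ _ _ h =>
      PowerSeries.ext fun n => congrFun h n
  obtain ⟨c, hc⟩ := exists_det_ne_zero_of_linearIndependent hcoeff
  refine ⟨_, hc, fun φ hφ => .of_comp (LinearMap.pi fun j => PowerSeries.coeff (c j)) ?_⟩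
  refine Matrix.linearIndependent_rows_of_det_ne_zero
    (A := Matrix.of fun i j => PowerSeries.coeff (c j) (PowerSeries.map φ (s i))) ?_
  rw [RingHom.map_det] at hφ
  convert hφ using 2
  ext
  simp

end LinearIndependence

section Specialization

variable {R : Type*} [CommRing R] [IsDomain R] [UniqueFactorizationMonoid R]

/- A nontrivial monic factor of a specialization of `P` would vanish on the specialized branch, or
its cofactor would. Its degrees are smaller than those of `P`, so this contradicts the independence
of the low-degree monomials along the branch, which survives wherever one minor does not vanish. -/
theorem exists_ne_zero_forall_irreducible_map {S : Type*} [CommRing S] [IsDomain S] {P : R[X][X]}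
    (hP : P.Monic) (hirr : Irreducible P) {x₀ y₀ : R} (h0 : P.evalEval x₀ y₀ = 0)
    (h1 : IsUnit (P.derivative.evalEval x₀ y₀)) :
    ∃ δ : R, δ ≠ 0 ∧ ∀ φ : R →+* S, φ δ ≠ 0 → Irreducible (P.map (mapRingHom φ)) := by
  obtain ⟨Y, hY⟩ := exists_evalBranch_eq_zero hP h0 h1
  obtain ⟨D, hPD⟩ := exists_mem_coeffDegreeLE P
  obtain ⟨δ, hδ, hφ⟩ := exists_ne_zero_forall_linearIndependent_map (S := S)
    (linearIndependent_evalBranch_monomial hirr hY D)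
  refine ⟨δ, hδ, fun φ hφδ => ?_⟩
  have hbranch : evalBranch (φ x₀) (PowerSeries.map φ Y) (P.map (mapRingHom φ)) = 0 := by
    rw [← map_evalBranch, hY, map_zero]
  have hPφ : (P.map (mapRingHom φ)).Monic := hP.map _
  have hdeg : (P.map (mapRingHom φ)).natDegree = P.natDegree := hP.natDegree_map _
  have hfactor : ∀ V, V.Monic → V ∣ P.map (mapRingHom φ) → V.natDegree < P.natDegree →
      evalBranch (φ x₀) (PowerSeries.map φ Y) V ≠ 0 := fun V hV hdvd hlt hzero => by
    obtain ⟨v, rfl⟩ := exists_bivariateOfCoeffs_eq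
      (mem_coeffDegreeLE_of_dvd hdvd hPφ.ne_zero (map_mem_coeffDegreeLE φ hPD))
      ((natDegree_lt_iff_degree_lt hV.ne_zero).mp hlt)
    refine hV.ne_zero ?_
    rw [evalBranch_bivariateOfCoeffs] at hzero
    have hv := Fintype.linearIndependent_iff.mp (hφ φ hφδ) v (by simpa [map_evalBranch] using hzero)
    rw [show v = 0 from funext hv, map_zero]
  have hpos : 0 < P.natDegree :=
    Nat.pos_of_ne_zero fun h => hirr.ne_one (hP.natDegree_eq_zero.mp h)
  refine (hPφ.irreducible_iff_natDegree').mpr ⟨fun h => ?_, fun V W hV hW hVW hmem => ?_⟩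
  · rw [h, natDegree_one] at hdeg
    omega
  · have hsum := hV.natDegree_mul hW
    rw [hVW, hdeg] at hsum
    rw [Finset.mem_Ioc, hdeg] at hmem
    rw [← hVW, map_mul, mul_eq_zero] at hbranch
    rcases hbranch with h | h
    · exact hfactor V hV ⟨W, hVW.symm⟩ (by omega) h
    · exact hfactor W hW ⟨V, by rw [← hVW, mul_comm]⟩ (by omega) h

end Specialization

section RationalPoints

theorem exists_pow_eq_self_eval_ne_zero {k : Type*} [Field k] [IsAlgClosed k] (p : ℕ)
    [Fact p.Prime] [CharP k p] {N : ℕ} {f : k[X]} (hf : f ≠ 0) (hN : f.natDegree < p ^ N) :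
    ∃ x, x ^ p ^ N = x ∧ f.eval x ≠ 0 := by
  by_contra! h
  refine hf ?_
  rcases eq_or_ne N 0 with rfl | hN0
  · exact Polynomial.funext (by simpa using h)
  have hq : 1 < p ^ N := Nat.one_lt_pow hN0 (Fact.out : p.Prime).one_lt
  have hsep : (X ^ p ^ N - X : k[X]).Separable :=
    galois_poly_separable p _ (dvd_pow_self p hN0)
  refine eq_zero_of_natDegree_lt_card_of_eval_eq_zero (f := Subtype.val) f
    (ι := (X ^ p ^ N - X : k[X]).rootSet k) Subtype.val_injective (fun x => h x ?_) ?_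
  · simpa [sub_eq_zero] using (mem_rootSet.mp x.2).2
  · rwa [card_rootSet_eq_natDegree hsep (by simpa using IsAlgClosed.splits _),
      FiniteField.X_pow_card_sub_X_natDegree_eq k hq]

end RationalPoints

section DividedDifference

variable {R : Type*} [CommRing R]

/-- The divided difference `(P(Y') - P(Y)) / (Y' - Y)`, as a polynomial in `Y'` with coefficients
polynomial in `Y`. -/
noncomputable def dividedDifference (P : R[X]) : R[X][X] :=
  P.map C /ₘ (X - C X)

theorem X_sub_C_mul_dividedDifference (P : R[X]) :
    (X - C X) * dividedDifference P = P.map C - C P := by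
  have h := modByMonic_eq_sub_mul_div (P.map C) (X - C X : R[X][X])
  rw [modByMonic_X_sub_C_eq_C_eval, eval_map, eval₂_C_X] at h
  rw [h, sub_sub_cancel, dividedDifference]

theorem sub_mul_eval₂_dividedDifference {S : Type*} [CommRing S] (φ : R →+* S) (P : R[X])
    (y y' : S) : (y' - y) * eval₂ (eval₂RingHom φ y) y' (dividedDifference P) =
      eval₂ φ y' P - eval₂ φ y P := by
  simpa [eval₂_map, eval₂RingHom_comp_C] using
    congrArg (eval₂ (eval₂RingHom φ y) y') (X_sub_C_mul_dividedDifference P)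

theorem natDegree_dividedDifference (P : R[X]) :
    (dividedDifference P).natDegree = P.natDegree - 1 := by
  nontriviality R
  rw [dividedDifference, natDegree_divByMonic _ (monic_X_sub_C _), natDegree_X_sub_C,
    natDegree_map_eq_of_injective C_injective]

theorem coeff_dividedDifference (P : R[X]) (n : ℕ) : (dividedDifference P).coeff n =
    ∑ i ∈ Finset.Icc (n + 1) P.natDegree, X ^ (i - (n + 1)) * C (P.coeff i) := by
  rw [dividedDifference, coeff_divByMonic_X_sub_C, natDegree_map_eq_of_injective C_injective]
  simp only [coeff_map]

theorem monic_dividedDifference {P : R[X]} (hP : P.Monic) (hd : P.natDegree ≠ 0) :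
    (dividedDifference P).Monic := by
  obtain ⟨e, he⟩ := Nat.exists_eq_succ_of_ne_zero hd
  rw [Polynomial.Monic, leadingCoeff, natDegree_dividedDifference, coeff_dividedDifference]
  have := hP.coeff_natDegree
  simp_all

theorem natDegree_coeff_dividedDifference_le (P : R[X]) (n : ℕ) :
    ((dividedDifference P).coeff n).natDegree ≤ P.natDegree := by
  rw [coeff_dividedDifference]
  refine natDegree_sum_le_of_forall_le _ _ fun i hi => ?_
  refine (natDegree_mul_C_le _ _).trans ((natDegree_X_pow_le _).trans ?_)
  have := (Finset.mem_Icc.mp hi).2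
  omega

theorem coeff_dividedDifference_mem_coeffDegreeLE {P : R[X][X]} {D : ℕ}
    (hP : P ∈ coeffDegreeLE R D) (n : ℕ) : (dividedDifference P).coeff n ∈ coeffDegreeLE R D := by
  rw [coeff_dividedDifference]
  refine Submodule.sum_mem _ fun i _ => ?_
  rw [mul_comm, C_mul_X_pow_eq_monomial]
  exact monomial_mem_coeffDegreeLE (hP i)

end DividedDifference

section Interpolation

theorem eval₂_dividedDifference_eq_zero {R S : Type*} [CommRing R] [CommRing S] [IsDomain S]
    {φ : R →+* S} {P : R[X]} {y y' : S} (hy : eval₂ φ y P = 0) (hy' : eval₂ φ y' P = 0)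
    (hne : y ≠ y') : eval₂ (eval₂RingHom φ y) y' (dividedDifference P) = 0 := by
  have h := sub_mul_eval₂_dividedDifference φ P y y'
  rw [hy, hy', sub_zero] at h
  exact (mul_eq_zero.mp h).resolve_left (sub_ne_zero.mpr hne.symm)

variable {k : Type*} [Field k] {P : k[X][X]} {ι J : Type*} [Fintype ι]

theorem exists_ne_zero_forall_dvd_sum_smul [Fintype J] (hP : P.Monic) {B : ℕ} {w : J → ι → k[X][X]}
    (hw : ∀ j i, w j i %ₘ P ∈ coeffDegreeLE k B)
    (hcard : Fintype.card J * (P.natDegree * (B + 1)) < Fintype.card ι) :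
    ∃ v : ι → k, v ≠ 0 ∧ ∀ j, P ∣ ∑ i, v i • w j i := by
  have hdeg : ∀ j i, (w j i %ₘ P).degree < P.natDegree := fun j i =>
    (degree_modByMonic_lt _ hP).trans_le degree_le_natDegree
  choose c hc using fun j i => exists_bivariateOfCoeffs_eq (hw j i) (hdeg j i)
  let T : (ι → k) →ₗ[k] J → Fin (B + 1) × Fin P.natDegree → k :=
    LinearMap.pi fun j => Fintype.linearCombination k (c j)
  obtain ⟨v, hv, hv0⟩ := Submodule.exists_mem_ne_zero_of_ne_bot
    (LinearMap.ker_ne_bot_of_finrank_lt (f := T) (by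
      simpa [Module.finrank_pi_fintype, mul_comm (B + 1)] using hcard))
  refine ⟨v, hv0, fun j => (modByMonic_eq_zero_iff_dvd hP).mp ?_⟩
  have hj : ∑ i, v i • c j i = 0 := congrFun (LinearMap.mem_ker.mp hv) j
  rw [← modByMonicHom_apply, map_sum, ← map_zero (bivariateOfCoeffs k B P.natDegree), ← hj, map_sum]
  refine Finset.sum_congr rfl fun i _ => ?_
  rw [modByMonicHom_apply, map_smul, hc, ← algebraMap_smul k[X] (v i), smul_modByMonic,
    algebraMap_smul]

theorem coeff_modByMonic_dividedDifference_mem_coeffDegreeLE {D a B : ℕ} (hP : P.Monic)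
    (hPD : P ∈ coeffDegreeLE k D) {w : k[X][X][X]} (hd : P.natDegree ≠ 0)
    (hdeg : w.natDegree ≤ P.natDegree - 1) (ha : ∀ j, (w.coeff j).natDegree ≤ a)
    (hB : ∀ j, w.coeff j ∈ coeffDegreeLE k B) (j : ℕ) :
    (w %ₘ dividedDifference P).coeff j %ₘ P ∈
      coeffDegreeLE k (B + D + (a + P.natDegree) * D) := by
  rw [modByMonic_eq_sub_of_natDegree_le (monic_dividedDifference hP hd)
    (by rwa [natDegree_dividedDifference]), coeff_sub, coeff_C_mul]
  refine modByMonic_mem_coeffDegreeLE hP hPD (Submodule.sub_mem _ ?_ ?_) ?_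
  · exact coeffDegreeLE_mono (Nat.le_add_right _ _) (hB j)
  · exact mul_mem_coeffDegreeLE (hB _) (coeff_dividedDifference_mem_coeffDegreeLE hPD j)
  · refine (natDegree_sub_le_of_le (ha j) (natDegree_mul_le_of_le (ha _)
      (natDegree_coeff_dividedDifference_le P j))).trans (max_le ?_ le_rfl)
    exact Nat.le_add_right _ _

theorem exists_ne_zero_forall_eval₂_eq_zero {D a B : ℕ} (hP : P.Monic)
    (hPD : P ∈ coeffDegreeLE k D) (hd : P.natDegree ≠ 0) {w : ι → k[X][X][X]}
    (hdeg : ∀ i, (w i).natDegree ≤ P.natDegree - 1) (ha : ∀ i j, ((w i).coeff j).natDegree ≤ a)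
    (hB : ∀ i j, (w i).coeff j ∈ coeffDegreeLE k B)
    (hcard : (P.natDegree - 1) * (P.natDegree * (B + D + (a + P.natDegree) * D + 1)) <
      Fintype.card ι) :
    ∃ v : ι → k, v ≠ 0 ∧ ∀ x y y', P.evalEval x y = 0 → P.evalEval x y' = 0 → y ≠ y' →
      eval₂ (evalEvalRingHom x y) y' (∑ i, v i • w i) = 0 := by
  have hQ := monic_dividedDifference hP hd
  obtain ⟨v, hv0, hv⟩ := exists_ne_zero_forall_dvd_sum_smul (J := Fin (P.natDegree - 1)) hP
    (w := fun j i => (w i %ₘ dividedDifference P).coeff j)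
    (fun j i => coeff_modByMonic_dividedDifference_mem_coeffDegreeLE hP hPD hd (hdeg i) (ha i)
      (hB i) j) (by simpa using hcard)
  refine ⟨v, hv0, fun x y y' hy hy' hne => ?_⟩
  rw [← eval₂_evalRingHom] at hy hy'
  have hQ0 := eval₂_dividedDifference_eq_zero hy hy' hne
  rw [← evalEvalRingHom_eq] at hQ0
  rw [← eval₂_modByMonic_eq_self_of_root hQ0, eval₂_eq_sum_range]
  refine Finset.sum_eq_zero fun j _ => ?_
  have hdvd : P ∣ ((∑ i, v i • w i) %ₘ dividedDifference P).coeff j := by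
    by_cases hj : j < P.natDegree - 1
    · convert hv ⟨j, hj⟩ using 1
      simp_rw [← modByMonicHom_apply, map_sum, finsetSum_coeff, modByMonicHom_apply,
        ← algebraMap_smul k[X][X] (_ : k), smul_modByMonic, coeff_smul]
    · rw [coeff_eq_zero_of_degree_lt]
      · exact dvd_zero P
      · refine (degree_modByMonic_lt _ hQ).trans_le (degree_le_of_natDegree_le ?_)
        rw [natDegree_dividedDifference]
        omega
  have h0 := evalEval_dvd x y hdvd
  rw [← eval₂_evalRingHom, hy, eval₂_evalRingHom, zero_dvd_iff] at h0
  rw [coe_evalEvalRingHom, h0, zero_mul]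

end Interpolation

section Stepanov

variable {k : Type*} [Field k] {A l d D n : ℕ} {P : k[X][X]}

/-- The polynomial `∑ i, Cᵢ(x, y) * (x ^ i.1 * y ^ i.2) ^ q`, where the entries of `c i` are the
coefficients of `Cᵢ`. For `q` a power of the characteristic these are the auxiliary polynomials of
Stepanov's method. -/
noncomputable def stepanovPolynomial (q : ℕ)
    (c : Fin (A + 1) × Fin d → Fin (l + 1) × Fin d → k) : k[X][X] :=
  ∑ i, bivariateOfCoeffs k l d (c i) * monomial (i.2 * q : ℕ) (monomial (i.1 * q : ℕ) 1)

theorem stepanovPolynomial_mem_coeffDegreeLE (q : ℕ)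
    (c : Fin (A + 1) × Fin d → Fin (l + 1) × Fin d → k) :
    stepanovPolynomial q c ∈ coeffDegreeLE k (l + A * q) :=
  Submodule.sum_mem _ fun i _ => mul_mem_coeffDegreeLE (bivariateOfCoeffs_mem_coeffDegreeLE _) <|
    monomial_mem_coeffDegreeLE <| (natDegree_monomial_le _).trans <|
      Nat.mul_le_mul_right q (Nat.lt_succ_iff.mp i.1.2)

theorem natDegree_stepanovPolynomial_le (q : ℕ)
    (c : Fin (A + 1) × Fin d → Fin (l + 1) × Fin d → k) :
    (stepanovPolynomial q c).natDegree ≤ d + d * q :=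
  natDegree_sum_le_of_forall_le _ _ fun i _ => natDegree_mul_le_of_le
    (natDegree_le_of_degree_le (degree_bivariateOfCoeffs_lt _).le)
    ((natDegree_monomial_le _).trans (Nat.mul_le_mul_right q i.2.2.le))

theorem eq_zero_of_dvd_stepanovPolynomial (p : ℕ) [ExpChar k p] [PerfectRing k p]
    {c : Fin (A + 1) × Fin P.natDegree → Fin (l + 1) × Fin P.natDegree → k}
    (hP : P.Monic) (hirr : Irreducible P) (hPD : P ∈ coeffDegreeLE k D) {x₀ y₀ : k}
    (h0 : P.evalEval x₀ y₀ = 0) (h1 : P.derivative.evalEval x₀ y₀ ≠ 0)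
    (hn : P.natDegree * (D + l) + 1 ≤ p ^ n) (hdvd : P ∣ stepanovPolynomial (p ^ n) c) :
    c = 0 := by
  obtain ⟨Y, hY⟩ := exists_evalBranch_eq_zero hP h0 h1.isUnit
  have hvanish : ∀ v : Fin (l + 1) × Fin P.natDegree → k,
      PowerSeries.X ^ p ^ n ∣ evalBranch x₀ Y (bivariateOfCoeffs k l P.natDegree v) → v = 0 :=
    fun v hv => bivariateOfCoeffs_injective <| (eq_zero_of_X_pow_dvd_evalBranch hirr hPD hY
      (degree_bivariateOfCoeffs_lt v) (bivariateOfCoeffs_mem_coeffDegreeLE v)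
      ((pow_dvd_pow _ hn).trans hv)).trans (map_zero _).symm
  have hsum : ∑ i, evalBranch x₀ Y (bivariateOfCoeffs k l P.natDegree (c i)) *
      evalBranch x₀ Y (monomial (i.2 : ℕ) (monomial (i.1 : ℕ) 1)) ^ p ^ n = 0 := by
    have h := map_dvd (evalBranch x₀ Y) hdvd
    rw [hY, zero_dvd_iff, stepanovPolynomial, map_sum] at h
    rw [← h]
    refine Finset.sum_congr rfl fun i _ => ?_
    rw [← map_pow, map_mul, monomial_pow, monomial_pow, one_pow]
  have hzero := eq_zero_of_sum_mul_pow_eq_zero p (linearIndependent_evalBranch_monomial hirr hY A)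
    (U := LinearMap.range ((evalBranch x₀ Y).toLinearMap ∘ₗ bivariateOfCoeffs k l P.natDegree))
    (by rintro _ ⟨v, rfl⟩ hv; rw [hvanish v hv, map_zero]) (fun i => ⟨c i, rfl⟩) hsum
  exact funext fun i => hvanish _ (hzero i ▸ dvd_zero _)

theorem stepanovPolynomial_evalEval_pow (p m : ℕ) [ExpChar k p]
    (c : Fin (A + 1) × Fin d → Fin (l + 1) × Fin d → k) {x : k} (hx : x ^ p ^ (m + n) = x) (y : k) :
    (stepanovPolynomial (p ^ n) c).evalEval x y ^ p ^ m =
      eval₂ (evalEvalRingHom x y) (y ^ p ^ (m + n))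
        (∑ i : (Fin (A + 1) × Fin d) × (Fin (l + 1) × Fin d), c i.1 i.2 ^ p ^ m •
          (monomial (i.1.2 : ℕ) (monomial (i.2.2 * p ^ m : ℕ)
            (monomial (i.2.1 * p ^ m + i.1.1 : ℕ) 1)) : k[X][X][X])) := by
  rw [stepanovPolynomial, evalEval_finsetSum, sum_pow_char_pow, eval₂_finsetSum]
  conv_rhs => rw [Fintype.sum_prod_type]
  refine Finset.sum_congr rfl fun i _ => ?_
  rw [bivariateOfCoeffs, Fintype.linearCombination_apply, Finset.sum_mul, evalEval_finsetSum,
    sum_pow_char_pow]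
  refine Finset.sum_congr rfl fun j _ => ?_
  simp only [evalEval, smul_monomial, eval₂_monomial, coe_evalEvalRingHom, eval_monomial, eval_mul,
    eval_pow, eval_C, smul_eq_mul, mul_one, one_mul]
  calc _ = c i j ^ p ^ m * (x ^ (j.1 * p ^ m : ℕ) * (x ^ p ^ (m + n)) ^ (i.1 : ℕ)) *
        y ^ (j.2 * p ^ m : ℕ) * (y ^ p ^ (m + n)) ^ (i.2 : ℕ) := by ring
    _ = _ := by rw [hx, ← pow_add]

theorem map_evalRingHom_modByMonic_eq_zero [IsAlgClosed k] {V : k[X][X]} {x : k}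
    (hP : P.Monic) (hsep : (P.map (evalRingHom x)).Separable)
    (hV : ∀ y, P.evalEval x y = 0 → V.evalEval x y = 0) : (V %ₘ P).map (evalRingHom x) = 0 := by
  rw [map_modByMonic _ hP, modByMonic_eq_zero_iff_dvd (hP.map _)]
  by_contra hndvd
  have hV0 : V.map (evalRingHom x) ≠ 0 := fun h => hndvd (h ▸ dvd_zero _)
  refine hndvd (((IsAlgClosed.splits _).dvd_iff_roots_le_roots (hP.map _).ne_zero hV0).mpr ?_)
  refine (Multiset.le_iff_subset (nodup_roots hsep)).mpr fun y hy => ?_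
  rw [mem_roots (hP.map _).ne_zero, IsRoot, map_evalRingHom_eval] at hy
  rw [mem_roots hV0, IsRoot, map_evalRingHom_eval, hV y hy]

end Stepanov

section CurvePoints

variable {k : Type*} [Field k] {A l d D m n : ℕ} {P : k[X][X]}

theorem evalEval_pow_eq_zero {R : Type*} [CommRing R] (p : ℕ) [ExpChar R p] {N : ℕ} {P : R[X][X]}
    (hfix : P.map (mapRingHom (iterateFrobenius R p N)) = P) {x y : R} (hx : x ^ p ^ N = x)
    (hy : P.evalEval x y = 0) : P.evalEval x (y ^ p ^ N) = 0 := by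
  have h := map_mapRingHom_evalEval (iterateFrobenius R p N) P x y
  rwa [hy, map_zero, hfix, iterateFrobenius_def, iterateFrobenius_def, hx] at h

theorem exists_ne_zero_stepanovPolynomial_evalEval_eq_zero (p : ℕ) [ExpChar k p] [PerfectRing k p]
    (hP : P.Monic) (hPD : P ∈ coeffDegreeLE k D) (hd : P.natDegree ≠ 0)
    (hfix : P.map (mapRingHom (iterateFrobenius k p (m + n))) = P)
    (hcard : (P.natDegree - 1) * (P.natDegree * (l * p ^ m + A + D +
      (P.natDegree * p ^ m + P.natDegree) * D + 1)) <
        (A + 1) * P.natDegree * ((l + 1) * P.natDegree)) :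
    ∃ c : Fin (A + 1) × Fin P.natDegree → Fin (l + 1) × Fin P.natDegree → k, c ≠ 0 ∧
      ∀ x y, x ^ p ^ (m + n) = x → y ^ p ^ (m + n) ≠ y → P.evalEval x y = 0 →
        (stepanovPolynomial (p ^ n) c).evalEval x y = 0 := by
  have hM : p ^ m ≠ 0 := pow_ne_zero m (expChar_pos k p).ne'
  obtain ⟨v, hv0, hv⟩ := exists_ne_zero_forall_eval₂_eq_zero (a := P.natDegree * p ^ m)
    (B := l * p ^ m + A) (ι := (Fin (A + 1) × Fin P.natDegree) × (Fin (l + 1) × Fin P.natDegree))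
    hP hPD hd (w := fun i => monomial (i.1.2 : ℕ)
      (monomial (i.2.2 * p ^ m : ℕ) (monomial (i.2.1 * p ^ m + i.1.1 : ℕ) 1)))
    (fun i => (natDegree_monomial_le _).trans (Nat.le_sub_one_of_lt i.1.2.2))
    (fun i j => by
      rw [coeff_monomial]
      split_ifs
      · exact (natDegree_monomial_le _).trans (Nat.mul_le_mul_right _ i.2.2.2.le)
      · simp)
    (fun i j => by
      rw [coeff_monomial]
      split_ifs
      · refine monomial_mem_coeffDegreeLE ((natDegree_monomial_le _).trans ?_)
        exact Nat.add_le_add (Nat.mul_le_mul_right _ (Nat.lt_succ_iff.mp i.2.1.2))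
          (Nat.lt_succ_iff.mp i.1.1.2)
      · exact Submodule.zero_mem _)
    (by simpa using hcard)
  let root := (iterateFrobeniusEquiv k p m).symm
  have hroot : ∀ a, root a ^ p ^ m = a := fun a => (iterateFrobeniusEquiv k p m).apply_symm_apply a
  refine ⟨fun i j => root (v (i, j)), fun h => hv0 (funext fun i => ?_), fun x y hx hy hxy => ?_⟩
  · exact (map_eq_zero_iff root root.injective).mp (congrFun (congrFun h i.1) i.2)
  · rw [← pow_eq_zero_iff hM, stepanovPolynomial_evalEval_pow p m _ hx]
    simp only [hroot]
    exact hv x y _ hxy (evalEval_pow_eq_zero p hfix hx hxy) hy.symm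

theorem stepanov_card_lt {e D M A K l : ℕ} (hM : 1 ≤ M) (hAM : A ≤ M)
    (hA : (2 * e + 1) * M ≤ 2 * (e + 1) * A) (hK : D + 2 * (e + 1) * D + 1 ≤ K)
    (hl : 2 * e * K ≤ l) :
    e * ((e + 1) * (l * M + A + D + ((e + 1) * M + (e + 1)) * D + 1)) <
      (A + 1) * (e + 1) * ((l + 1) * (e + 1)) := by
  have hKM : A + D + ((e + 1) * M + (e + 1)) * D + 1 ≤ M + K * M := by
    nlinarith [Nat.mul_le_mul_left D hM, Nat.mul_le_mul_left (e * D) hM]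
  have key : 2 * (e * (l * M + A + D + ((e + 1) * M + (e + 1)) * D + 1)) <
      2 * ((A + 1) * ((l + 1) * (e + 1))) :=
    calc 2 * (e * (l * M + A + D + ((e + 1) * M + (e + 1)) * D + 1))
        = 2 * e * (l * M + (A + D + ((e + 1) * M + (e + 1)) * D + 1)) := by ring
      _ ≤ 2 * e * (l * M + (M + K * M)) := by gcongr
      _ = 2 * e * ((l + 1) * M) + 2 * e * K * M := by ring
      _ ≤ 2 * e * ((l + 1) * M) + (l + 1) * M := by gcongr; omega
      _ = (l + 1) * ((2 * e + 1) * M) := by ring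
      _ ≤ (l + 1) * (2 * (e + 1) * A) := by gcongr
      _ = 2 * (A * ((l + 1) * (e + 1))) := by ring
      _ < 2 * ((A + 1) * ((l + 1) * (e + 1))) := by gcongr; omega
  rw [mul_left_comm, mul_right_comm, mul_comm _ (e + 1)]
  exact Nat.mul_lt_mul_of_pos_left (Nat.lt_of_mul_lt_mul_left key) e.succ_pos

-- With `K = D + 2 * d * D + 1`, take `l = 2 * d * K` and `A = p ^ m - p ^ m / (2 * d)`.
theorem exists_stepanov_parameters (p d D c : ℕ) (hp : 1 < p) (hd : d ≠ 0) :
    ∃ A l m n₀,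
      (d - 1) * (d * (l * p ^ m + A + D + (d * p ^ m + d) * D + 1)) <
        (A + 1) * d * ((l + 1) * d) ∧
      ∀ n ≥ n₀, d * (D + l) + 1 ≤ p ^ n ∧
        l + A * p ^ n + (d + d * p ^ n) * D + c < p ^ (m + n) := by
  obtain ⟨e, rfl⟩ : ∃ e, d = e + 1 := ⟨d - 1, by omega⟩
  obtain ⟨m, hm⟩ : ∃ m, (e + 1) * D + 1 ≤ p ^ m / (2 * (e + 1)) :=
    ⟨2 * (e + 1) * ((e + 1) * D + 1), (Nat.le_div_iff_mul_le (by omega)).mpr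
      ((mul_comm _ _).trans_le (Nat.lt_pow_self hp).le)⟩
  have hdiv : 2 * (e + 1) * (p ^ m / (2 * (e + 1))) ≤ p ^ m := Nat.mul_div_le _ _
  generalize p ^ m / (2 * (e + 1)) = h at hm hdiv
  obtain ⟨A, hA⟩ : ∃ A, p ^ m = A + h := ⟨p ^ m - h, (Nat.sub_add_cancel (by nlinarith)).symm⟩
  let l := 2 * (e + 1) * (D + 2 * (e + 1) * D + 1)
  refine ⟨A, l, m, (e + 1) * (D + l) + (l + (e + 1) * D + c), ?_, fun n hn => ?_⟩
  · rw [Nat.add_sub_cancel]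
    refine stepanov_card_lt (by omega) (by omega) ?_ le_rfl (Nat.mul_le_mul_right _ (by omega))
    generalize p ^ m = M at hA hdiv
    nlinarith
  · have hpn : n < p ^ n := Nat.lt_pow_self hp
    refine ⟨by omega, ?_⟩
    calc l + A * p ^ n + (e + 1 + (e + 1) * p ^ n) * D + c
        = (l + (e + 1) * D + c) + (A + (e + 1) * D) * p ^ n := by ring
      _ < p ^ n + (A + (e + 1) * D) * p ^ n := by gcongr; omega
      _ = (A + ((e + 1) * D + 1)) * p ^ n := by ring
      _ ≤ (A + h) * p ^ n := by gcongr
      _ = p ^ (m + n) := by rw [← hA, pow_add]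

theorem exists_isRoot_eval_derivative_ne_zero [IsAlgClosed k] {f : k[X]} (hf : f.Separable)
    (hd : f.natDegree ≠ 0) : ∃ y, f.IsRoot y ∧ f.derivative.eval y ≠ 0 := by
  obtain ⟨y, hy⟩ := IsAlgClosed.exists_root f fun h => hd (natDegree_eq_of_degree_eq_some h)
  refine ⟨y, hy, ?_⟩
  have h := hf.aeval_derivative_ne_zero (x := y) (by rwa [coe_aeval_eq_eval])
  rwa [coe_aeval_eq_eval] at h

theorem exists_evalEval_eq_zero_evalEval_derivative_ne_zero [IsAlgClosed k] (hP : P.Monic)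
    (hd : P.natDegree ≠ 0) {x : k} (hsep : (P.map (evalRingHom x)).Separable) :
    ∃ y, P.evalEval x y = 0 ∧ P.derivative.evalEval x y ≠ 0 := by
  obtain ⟨y, h0, h1⟩ := exists_isRoot_eval_derivative_ne_zero hsep (by rwa [hP.natDegree_map])
  rw [IsRoot, map_evalRingHom_eval] at h0
  rw [derivative_map, map_evalRingHom_eval] at h1
  exact ⟨y, h0, h1⟩

theorem exists_forall_ge_exists_evalEval_eq_zero [IsAlgClosed k] (p : ℕ) [Fact p.Prime] [CharP k p]
    (d D c : ℕ) (hd : d ≠ 0) : ∃ N₀ : ℕ, ∀ N ≥ N₀, ∀ P : k[X][X], P.Monic → P.natDegree = d →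
      P ∈ coeffDegreeLE k D → Irreducible P → P.map (mapRingHom (iterateFrobenius k p N)) = P →
      ∀ β : k[X], β ≠ 0 → β.natDegree ≤ c →
      (∀ x, β.eval x ≠ 0 → (P.map (evalRingHom x)).Separable) →
      ∃ x y, x ^ p ^ N = x ∧ y ^ p ^ N = y ∧ β.eval x ≠ 0 ∧ P.evalEval x y = 0 := by
  obtain ⟨A, l, m, n₀, hcard, hn₀⟩ := exists_stepanov_parameters p d D c
    (Fact.out : p.Prime).one_lt hd
  refine ⟨m + n₀, fun N hN P hP hPd hPD hirr hfix β hβ hβc hsep => ?_⟩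
  obtain ⟨n, rfl⟩ : ∃ n, N = m + n := ⟨N - m, by omega⟩
  obtain ⟨hn, hdeg⟩ := hn₀ n (by omega)
  subst hPd
  by_contra! hirrational
  obtain ⟨v, hv0, hv⟩ := exists_ne_zero_stepanovPolynomial_evalEval_eq_zero p hP hPD hd hfix hcard
  let E := stepanovPolynomial (p ^ n) v
  have hEP : ¬ P ∣ E := fun hdvd => by
    obtain ⟨x₀, hx₀⟩ := exists_eval_ne_zero_of_natDegree_lt_card β hβ
      (Cardinal.natCast_lt_aleph0.trans_le (Cardinal.aleph0_le_mk k))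
    obtain ⟨y₀, h0, h1⟩ := exists_evalEval_eq_zero_evalEval_derivative_ne_zero hP hd (hsep x₀ hx₀)
    exact hv0 (eq_zero_of_dvd_stepanovPolynomial p hP hirr hPD h0 h1 hn hdvd)
  obtain ⟨i, hi⟩ : ∃ i, (E %ₘ P).coeff i ≠ 0 := by
    by_contra! h
    exact hEP ((modByMonic_eq_zero_iff_dvd hP).mp (Polynomial.ext h))
  have hcoeff : ((E %ₘ P).coeff i * β).natDegree < p ^ (m + n) :=
    (natDegree_mul_le_of_le (modByMonic_mem_coeffDegreeLE hP hPD
      (stepanovPolynomial_mem_coeffDegreeLE _ v) (natDegree_stepanovPolynomial_le _ v) i)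
      hβc).trans_lt hdeg
  obtain ⟨x, hx, hβx⟩ := exists_pow_eq_self_eval_ne_zero p (mul_ne_zero hi hβ) hcoeff
  rw [eval_mul, mul_ne_zero_iff] at hβx
  have hzero : (E %ₘ P).map (evalRingHom x) = 0 :=
    map_evalRingHom_modByMonic_eq_zero hP (hsep x hβx.2) fun y hy =>
      hv x y hx (fun h => hirrational x y hx h hβx.2 hy) hy
  exact hβx.1 (by simpa using congrArg (coeff · i) hzero)

end CurvePoints

section Pencil

variable {k : Type*} [Field k] {a m : k[X]} {x₀ : k} {β : k[X][X]} {H : k[X][X][X]}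

theorem irreducible_map_of_comp_eq_algebraMap {A B F : Type*} [CommRing A]
    [IsIntegrallyClosed A] [CommRing B] [IsDomain B] [Field F] [Algebra A F] [IsFractionRing A F]
    {σ : A →+* B} {ρ : B →+* F} (h : ρ.comp σ = algebraMap A F) {H : A[X]} (hH : H.Monic)
    (hirr : Irreducible H) : Irreducible (H.map σ) := by
  refine Monic.irreducible_of_irreducible_map ρ _ (hH.map σ) ?_
  rw [Polynomial.map_map, h]
  exact (hH.irreducible_iff_irreducible_map_fraction_map (K := F)).mp hirr

/-- The homomorphism `k[x][z] → k[w][x]` sending `z` to `a(x) + w m(x)`, that is, restriction to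
the pencil of plane curves `z = a(x) + w m(x)`. -/
noncomputable def pencil (a m : k[X]) : k[X][X] →+* k[X][X] :=
  eval₂RingHom (mapRingHom C) (a.map C + C X * m.map C)

theorem pencil_C (a m b : k[X]) : pencil a m (C b) = b.map C := by simp [pencil]

theorem pencil_X (a m : k[X]) : pencil a m X = a.map C + C X * m.map C := by simp [pencil]

theorem map_evalRingHom_map_C {R : Type*} [CommRing R] (b : R[X]) (w : R) :
    (b.map C).map (evalRingHom w) = b := by
  rw [Polynomial.map_map, show (evalRingHom w).comp C = RingHom.id R by ext; simp, map_id]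

theorem mapRingHom_evalRingHom_comp_pencil (a m : k[X]) (w : k) :
    (mapRingHom (evalRingHom w)).comp (pencil a m) = evalRingHom (a + C w * m) :=
  Polynomial.ringHom_ext (fun b => by simp [pencil_C, map_evalRingHom_map_C])
    (by simp [pencil_X, map_evalRingHom_map_C])

theorem evalRingHom_C_comp_pencil (a : k[X]) (hm : m.eval x₀ = 0) :
    (evalRingHom (C x₀)).comp (pencil a m) =
      (C : k →+* k[X]).comp (evalEvalRingHom x₀ (a.eval x₀)) :=
  Polynomial.ringHom_ext (fun b => by simp [pencil_C, eval_map, eval₂_at_apply])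
    (by simp [pencil_X, eval_map, eval₂_at_apply, hm])

theorem evalRingHom_comp_evalRingHom {R : Type*} [CommRing R] (x : R) (g : R[X]) :
    (evalRingHom x).comp (evalRingHom g) = evalEvalRingHom x (g.eval x) :=
  Polynomial.ringHom_ext (by simp) (by simp)

theorem eval_eval_eq_evalEval {R : Type*} [CommRing R] (x : R) (g : R[X]) (β : R[X][X]) :
    (β.eval g).eval x = β.evalEval x (g.eval x) :=
  RingHom.congr_fun (evalRingHom_comp_evalRingHom x g) β

-- The pencil is inverted by `w = (z - a(x)) / m(x)` over the fraction field of `k[x][z]`.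
theorem irreducible_map_pencil (a : k[X]) (hm : m ≠ 0) (hH : H.Monic) (hirr : Irreducible H) :
    Irreducible (H.map (pencil a m)) := by
  let ι := algebraMap k[X][X] (FractionRing k[X][X])
  let ρ : k[X][X] →+* FractionRing k[X][X] :=
    eval₂RingHom (eval₂RingHom (ι.comp (C.comp C)) (ι (X - C a) / ι (C m))) (ι (C X))
  have hιm : ι (C m) ≠ 0 := by
    rwa [Ne, map_eq_zero_iff ι (IsFractionRing.injective _ _), C_eq_zero]
  have hρ (b : k[X]) : ρ (b.map C) = ι (C b) :=
    RingHom.congr_fun (f := ρ.comp (mapRingHom C)) (g := ι.comp C)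
      (Polynomial.ringHom_ext (fun c => by simp [ρ]) (by simp [ρ])) b
  refine irreducible_map_of_comp_eq_algebraMap (ρ := ρ)
    (Polynomial.ringHom_ext (fun b => ?_) ?_) hH hirr
  · rw [RingHom.comp_apply, pencil_C, hρ]
  · have hρw : ρ (C X) = ι (X - C a) / ι (C m) := by simp [ρ]
    rw [RingHom.comp_apply, pencil_X, map_add, map_mul, hρ, hρ, hρw, div_mul_cancel₀ _ hιm,
      ← map_add, add_sub_cancel]

theorem exists_evalEval_pow_ne_zero {R : Type*} [CommRing R] [IsDomain R] [Infinite R]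
    {β : R[X][X]} (hβ : β ≠ 0) : ∃ (n : ℕ) (x : R), β.evalEval x (x ^ n) ≠ 0 := by
  by_contra! h
  refine hβ (eq_zero_of_infinite_isRoot β ((Set.infinite_range_of_injective
    (fun u v (huv : (X ^ u : R[X]) = X ^ v) => by simpa using congrArg natDegree huv)).mono ?_))
  rintro _ ⟨n, rfl⟩
  exact Polynomial.funext fun x => by simpa [eval_eval_eq_evalEval] using h n x

theorem exists_pencil_irreducible [IsAlgClosed k] (p : ℕ) [Fact p.Prime] [CharP k p]
    (hk : ∀ x : k, ∃ s, s ≠ 0 ∧ x ^ p ^ s = x) (hH : H.Monic) (hirr : Irreducible H) (hβ : β ≠ 0)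
    (hsep : ∀ x z, β.evalEval x z ≠ 0 → (H.map (evalEvalRingHom x z)).Separable) :
    ∃ a m : k[X], (∀ N, a.map (iterateFrobenius k p N) = a ∧ m.map (iterateFrobenius k p N) = m) ∧
      (∀ w, β.eval (a + C w * m) ≠ 0) ∧
      ∃ δ : k[X], δ ≠ 0 ∧ ∀ w, δ.eval w ≠ 0 →
        Irreducible (H.map (evalRingHom (a + C w * m))) := by
  obtain ⟨n, x₀, hx₀⟩ := exists_evalEval_pow_ne_zero hβ
  obtain ⟨s, hs, hxs⟩ := hk x₀
  have hm : (X ^ p ^ s - X : k[X]) ≠ 0 :=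
    FiniteField.X_pow_card_sub_X_ne_zero k (Nat.one_lt_pow hs (Fact.out : p.Prime).one_lt)
  have hmx₀ : (X ^ p ^ s - X : k[X]).eval x₀ = 0 := by simp [hxs]
  obtain ⟨y₀, h0, h1⟩ := exists_isRoot_eval_derivative_ne_zero (hsep _ _ hx₀) (by
    rw [hH.natDegree_map]
    exact (hH.natDegree_pos_of_not_isUnit hirr.not_isUnit).ne')
  have hfibre : (H.map (pencil (X ^ n) (X ^ p ^ s - X))).map (evalRingHom (C x₀)) =
      (H.map (evalEvalRingHom x₀ (x₀ ^ n))).map C := by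
    rw [Polynomial.map_map, Polynomial.map_map, evalRingHom_C_comp_pencil _ hmx₀, eval_pow, eval_X]
  obtain ⟨δ, hδ, hδirr⟩ := exists_ne_zero_forall_irreducible_map (S := k)
    (x₀ := C x₀) (y₀ := C y₀) (hH.map _) (irreducible_map_pencil (X ^ n) hm hH hirr)
    (by rw [← map_evalRingHom_eval, hfibre, eval_map_apply, h0.eq_zero, C_0])
    (by
      rw [← map_evalRingHom_eval, ← derivative_map, hfibre, derivative_map, eval_map_apply]
      exact h1.isUnit.map C)
  refine ⟨X ^ n, X ^ p ^ s - X, fun N => by simp, fun w hw => hx₀ ?_, δ, hδ, fun w hw => ?_⟩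
  · have h : (X ^ n + C w * (X ^ p ^ s - X) : k[X]).eval x₀ = x₀ ^ n := by simp [hxs]
    rw [← h, ← eval_eval_eq_evalEval, hw, eval_zero]
  · rw [← mapRingHom_evalRingHom_comp_pencil, ← Polynomial.map_map]
    exact hδirr (evalRingHom w) hw

theorem exists_forall_ge_exists_eval_map_evalEvalRingHom_eq_zero [IsAlgClosed k] (p : ℕ)
    [Fact p.Prime] [CharP k p] (hk : ∀ x : k, ∃ s, s ≠ 0 ∧ x ^ p ^ s = x) (hH : H.Monic)
    (hirr : Irreducible H) (hβ : β ≠ 0)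
    (hsep : ∀ x z, β.evalEval x z ≠ 0 → (H.map (evalEvalRingHom x z)).Separable) :
    ∃ N₀ : ℕ, ∀ N ≥ N₀, H.map (mapRingHom (mapRingHom (iterateFrobenius k p N))) = H →
      ∃ x z y, x ^ p ^ N = x ∧ z ^ p ^ N = z ∧ y ^ p ^ N = y ∧
        β.evalEval x z ≠ 0 ∧ (H.map (evalEvalRingHom x z)).eval y = 0 := by
  obtain ⟨a, m, hfrob, hβ', δ, hδ, hδirr⟩ := exists_pencil_irreducible p hk hH hirr hβ hsep
  obtain ⟨D, hD⟩ := exists_mem_coeffDegreeLE (H.map (pencil a m))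
  obtain ⟨N₀, hN₀⟩ := exists_forall_ge_exists_evalEval_eq_zero (k := k) p H.natDegree D
    (pencil a m β).natDegree (hH.natDegree_pos_of_not_isUnit hirr.not_isUnit).ne'
  refine ⟨max N₀ δ.natDegree, fun N hN hfix => ?_⟩
  obtain ⟨w, hw, hδw⟩ := exists_pow_eq_self_eval_ne_zero p hδ
    ((le_of_max_le_right hN).trans_lt (Nat.lt_pow_self (Fact.out : p.Prime).one_lt))
  have hgw : (a + C w * m).map (iterateFrobenius k p N) = a + C w * m := by
    simp [(hfrob N).1, (hfrob N).2, iterateFrobenius_def, hw]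
  have hspec : H.map (evalRingHom (a + C w * m)) =
      (H.map (pencil a m)).map (mapRingHom (evalRingHom w)) := by
    rw [Polynomial.map_map, mapRingHom_evalRingHom_comp_pencil]
  have hβw : β.eval (a + C w * m) = (pencil a m β).map (evalRingHom w) :=
    (RingHom.congr_fun (mapRingHom_evalRingHom_comp_pencil a m w) β).symm
  have hirrw := hδirr w hδw
  have hβ0 := hβ' w
  generalize a + C w * m = g at *
  obtain ⟨x, y, hx, hy, hβx, hxy⟩ := hN₀ N (le_of_max_le_left hN) _ (hH.map (evalRingHom g))
    (hH.natDegree_map _) (hspec ▸ map_mem_coeffDegreeLE _ hD) hirrw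
    (by
      conv_rhs => rw [← hfix]
      rw [Polynomial.map_map, Polynomial.map_map]
      congr 1
      exact Polynomial.ringHom_ext (by simp) (by simp [hgw]))
    _ hβ0 (hβw ▸ natDegree_map_le) fun x hx => by
      rw [Polynomial.map_map, evalRingHom_comp_evalRingHom]
      exact hsep _ _ (by rwa [← eval_eval_eq_evalEval])
  refine ⟨x, g.eval x, y, hx, ?_, hy, by rwa [← eval_eval_eq_evalEval], ?_⟩
  · have h := congrArg (eval x) hgw
    rwa [← hx, ← iterateFrobenius_def, eval_map_apply, iterateFrobenius_def,
      iterateFrobenius_def, hx] at h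
  · rwa [← map_evalRingHom_eval, Polynomial.map_map, evalRingHom_comp_evalRingHom] at hxy

end Pencil

section IntegralNormalization

variable {A : Type*} [CommRing A] [IsDomain A] {H : A[X]}

theorem integralNormalization_comp_C_leadingCoeff_mul_X {R : Type*} [CommRing R] {P : R[X]}
    (hd : P.natDegree ≠ 0) : P.integralNormalization.comp (C P.leadingCoeff * X) =
      C (P.leadingCoeff ^ (P.natDegree - 1)) * P := by
  rw [comp, integralNormalization_eval₂_leadingCoeff_mul (Nat.one_le_iff_ne_zero.mpr hd) C X,
    eval₂_C_X, C_pow]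

theorem irreducible_integralNormalization_of_field {F : Type*} [Field F] {P : F[X]}
    (hP : Irreducible P) : Irreducible P.integralNormalization := by
  have hlc : P.leadingCoeff ≠ 0 := leadingCoeff_ne_zero.mpr hP.ne_zero
  let _ := invertibleOfNonzero hlc
  have hcomp := integralNormalization_comp_C_leadingCoeff_mul_X hP.natDegree_pos.ne'
  rw [← MulEquiv.irreducible_iff (algEquivCMulXAddC P.leadingCoeff 0),
    algEquivCMulXAddC_apply, ← comp_eq_aeval, C_0, add_zero, hcomp]
  exact (irreducible_isUnit_mul (isUnit_C.mpr (pow_ne_zero _ hlc).isUnit)).mpr hP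

theorem irreducible_integralNormalization [IsGCDMonoid A] (hirr : Irreducible H)
    (hd : H.natDegree ≠ 0) : Irreducible H.integralNormalization := by
  let F := FractionRing A
  have hlc : algebraMap A F H.leadingCoeff ≠ 0 := by simpa using hirr.ne_zero
  refine (monic_integralNormalization hirr.ne_zero).irreducible_of_irreducible_map
    (algebraMap A F) _ ?_
  rw [← integralNormalization_map (algebraMap A F) H hlc]
  exact irreducible_integralNormalization_of_field
    ((hirr.isPrimitive hd).irreducible_iff_irreducible_map_fraction_map.mp hirr)

theorem derivative_integralNormalization_ne_zero (hd : derivative H ≠ 0) :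
    derivative H.integralNormalization ≠ 0 := by
  intro h
  have hlc : H.leadingCoeff ≠ 0 :=
    leadingCoeff_ne_zero.mpr fun hH => hd (by rw [hH, derivative_zero])
  have hscale : derivative (H.scaleRoots H.leadingCoeff) = 0 := by
    rw [← integralNormalization_mul_C_leadingCoeff, derivative_mul, h, derivative_C, zero_mul,
      mul_zero, add_zero]
  refine hd (Polynomial.ext fun i => ?_)
  have hi := congrArg (coeff · i) hscale
  simpa [coeff_derivative, hlc, or_assoc, or_comm] using hi

theorem eval_map_div_leadingCoeff_eq_zero {R F : Type*} [CommRing R] [Field F] {H : R[X]}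
    {φ : R →+* F} {y : F} (hd : H.natDegree ≠ 0) (hlc : φ H.leadingCoeff ≠ 0)
    (hy : (H.integralNormalization.map φ).eval y = 0) :
    (H.map φ).eval (y / φ H.leadingCoeff) = 0 := by
  rw [eval_map, ← mul_div_cancel₀ y hlc,
    integralNormalization_eval₂_leadingCoeff_mul (Nat.one_le_iff_ne_zero.mpr hd)] at hy
  rw [eval_map]
  exact (mul_eq_zero.mp hy).resolve_left (pow_ne_zero _ hlc)

theorem exists_ne_zero_forall_separable_map {F : Type*} [Field F] [IsGCDMonoid A] (hH : H.Monic)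
    (hirr : Irreducible H) (hd : derivative H ≠ 0) :
    ∃ δ : A, δ ≠ 0 ∧ ∀ φ : A →+* F, φ δ ≠ 0 → (H.map φ).Separable := by
  have hn : H.natDegree ≠ 0 := fun h => hd (derivative_of_natDegree_zero h)
  obtain ⟨δ, u, v, hδ, huv⟩ := exists_mul_add_mul_eq_C_of_irreducible hirr hn
    (hH.not_dvd_of_natDegree_lt hd (natDegree_derivative_lt hn))
  refine ⟨δ, hδ, fun φ hφ => ⟨C (φ δ)⁻¹ * u.map φ, C (φ δ)⁻¹ * v.map φ, ?_⟩⟩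
  have hmap : H.map φ * u.map φ + derivative (H.map φ) * v.map φ = C (φ δ) := by
    simpa [derivative_map] using congrArg (Polynomial.map φ) huv
  have hinv : C (φ δ)⁻¹ * C (φ δ) = 1 := by rw [← C_mul, inv_mul_cancel₀ hφ, C_1]
  linear_combination C (φ δ)⁻¹ * hmap + hinv

end IntegralNormalization

section SurfacePoints

theorem exists_forall_ge_exists_eval_eq_zero_eval_ne_zero {k : Type*} [Field k] [IsAlgClosed k]
    (p : ℕ) [Fact p.Prime] [CharP k p] (hk : ∀ x : k, ∃ s, s ≠ 0 ∧ x ^ p ^ s = x)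
    {H B : k[X][X][X]} (hirr : Irreducible H) (hd : derivative H ≠ 0) (hHB : ¬ H ∣ B) :
    ∃ N₀ : ℕ, ∀ N ≥ N₀, H.map (mapRingHom (mapRingHom (iterateFrobenius k p N))) = H →
      ∃ x z y, x ^ p ^ N = x ∧ z ^ p ^ N = z ∧ y ^ p ^ N = y ∧
        (H.map (evalEvalRingHom x z)).eval y = 0 ∧ (B.map (evalEvalRingHom x z)).eval y ≠ 0 := by
  have hn : H.natDegree ≠ 0 := fun h => hd (derivative_of_natDegree_zero h)
  have hlc : H.leadingCoeff ≠ 0 := leadingCoeff_ne_zero.mpr hirr.ne_zero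
  have hmon := monic_integralNormalization hirr.ne_zero
  have hirr' := irreducible_integralNormalization hirr hn
  obtain ⟨b, u, v, hb, huv⟩ := exists_mul_add_mul_eq_C_of_irreducible hirr hn hHB
  obtain ⟨δ, hδ, hsep⟩ := exists_ne_zero_forall_separable_map (F := k) hmon hirr'
    (derivative_integralNormalization_ne_zero hd)
  obtain ⟨N₀, hN₀⟩ := exists_forall_ge_exists_eval_map_evalEvalRingHom_eq_zero p hk hmon hirr'
    (β := δ * H.leadingCoeff * b) (mul_ne_zero (mul_ne_zero hδ hlc) hb)
    fun x z h => hsep _ (by simp_all [evalEval_mul])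
  refine ⟨N₀, fun N hN hfix => ?_⟩
  have hinj : Function.Injective (mapRingHom (mapRingHom (iterateFrobenius k p N))) :=
    Polynomial.map_injective _ (Polynomial.map_injective _ (RingHom.injective _))
  have hlcfix : mapRingHom (mapRingHom (iterateFrobenius k p N)) H.leadingCoeff = H.leadingCoeff :=
    by rw [← leadingCoeff_map_of_injective hinj, hfix]
  obtain ⟨x, z, y, hx, hz, hy, hβ, hy0⟩ := hN₀ N hN
    (by rw [← integralNormalization_map _ H (by rwa [hlcfix]), hfix])
  simp only [evalEval_mul, mul_ne_zero_iff] at hβ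
  have hroot := eval_map_div_leadingCoeff_eq_zero (φ := evalEvalRingHom x z) hn hβ.1.2 hy0
  refine ⟨x, z, _, hx, hz, ?_, hroot, fun hB => hβ.2 ?_⟩
  · have h := map_mapRingHom_evalEval (iterateFrobenius k p N) H.leadingCoeff x z
    rw [← coe_mapRingHom, hlcfix] at h
    simp only [iterateFrobenius_def, hx, hz] at h
    rw [div_pow, hy, coe_evalEvalRingHom, ← h]
  · have h := congrArg (fun Q => (Q.map (evalEvalRingHom x z)).eval
      (y / evalEvalRingHom x z H.leadingCoeff)) huv
    simp only [Polynomial.map_add, Polynomial.map_mul, eval_add, eval_mul, hroot, hB, zero_mul,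
      add_zero, map_C, eval_C] at h
    exact h.symm

end SurfacePoints

section Trivariate

/-- The identification of `R[X₀, X₁, X₂]` with iterated univariate polynomials, under which `X₀`
becomes the outermost variable, `X₂` the middle one and `X₁` the innermost one. -/
noncomputable def trivariateEquiv (R : Type*) [CommRing R] :
    MvPolynomial (Fin 3) R ≃ₐ[R] R[X][X][X] :=
  (MvPolynomial.finSuccEquiv R 2).trans
    (Polynomial.mapAlgEquiv (Polynomial.Bivariate.equivMvPolynomial R).symm)

variable {R : Type*} [CommRing R]

@[simp]
theorem trivariateEquiv_C (a : R) : trivariateEquiv R (MvPolynomial.C a) = C (C (C a)) := by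
  simp [trivariateEquiv, MvPolynomial.finSuccEquiv_apply]

@[simp]
theorem trivariateEquiv_X_zero : trivariateEquiv R (MvPolynomial.X 0) = X := by
  simp [trivariateEquiv, MvPolynomial.finSuccEquiv_X_zero]

@[simp]
theorem trivariateEquiv_X_one : trivariateEquiv R (MvPolynomial.X 1) = C (C X) := by
  have h : MvPolynomial.finSuccEquiv R 2 (MvPolynomial.X 1) = C (MvPolynomial.X 0) :=
    MvPolynomial.finSuccEquiv_X_succ (j := 0)
  simp [trivariateEquiv, h]

@[simp]
theorem trivariateEquiv_X_two : trivariateEquiv R (MvPolynomial.X 2) = C X := by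
  have h : MvPolynomial.finSuccEquiv R 2 (MvPolynomial.X 2) = C (MvPolynomial.X 1) :=
    MvPolynomial.finSuccEquiv_X_succ (j := 1)
  simp [trivariateEquiv, h]

theorem eval_map_evalEvalRingHom_trivariateEquiv (x z y : R) (g : MvPolynomial (Fin 3) R) :
    ((trivariateEquiv R g).map (evalEvalRingHom x z)).eval y = MvPolynomial.eval ![y, x, z] g := by
  suffices ((evalRingHom y).comp (mapRingHom (evalEvalRingHom x z))).comp
      (trivariateEquiv R : _ →+* _) = MvPolynomial.eval ![y, x, z] from congrArg (· g) this
  refine MvPolynomial.ringHom_ext (fun a => by simp) fun i => ?_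
  fin_cases i <;> simp

theorem trivariateEquiv_map {S : Type*} [CommRing S] (φ : R →+* S) (g : MvPolynomial (Fin 3) R) :
    trivariateEquiv S (MvPolynomial.map φ g) =
      (trivariateEquiv R g).map (mapRingHom (mapRingHom φ)) := by
  suffices (trivariateEquiv S : _ →+* S[X][X][X]).comp (MvPolynomial.map φ) =
      (mapRingHom (mapRingHom (mapRingHom φ))).comp (trivariateEquiv R : _ →+* R[X][X][X]) from
    congrArg (· g) this
  refine MvPolynomial.ringHom_ext (fun a => by simp) fun i => ?_
  fin_cases i <;> simp

theorem trivariateEquiv_pderiv_zero (g : MvPolynomial (Fin 3) R) :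
    trivariateEquiv R (MvPolynomial.pderiv 0 g) = derivative (trivariateEquiv R g) := by
  induction g using MvPolynomial.induction_on with
  | C a => simp
  | add g₁ g₂ h₁ h₂ => simp [h₁, h₂]
  | mul_X g i h =>
    have hX : trivariateEquiv R (MvPolynomial.pderiv 0 (MvPolynomial.X i)) =
        derivative (trivariateEquiv R (MvPolynomial.X i)) := by
      fin_cases i <;> simp [MvPolynomial.pderiv_X]
    rw [MvPolynomial.pderiv_mul, map_add, map_mul, map_mul, h, hX, map_mul, derivative_mul]

end Trivariate

section PartialDerivatives

variable {σ R : Type*} [CommRing R] [NoZeroDivisors R] {g : MvPolynomial σ R}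

theorem dvd_of_mem_support_of_pderiv_eq_zero (p : ℕ) [CharP R p] {i : σ}
    (hg : MvPolynomial.pderiv i g = 0) {s : σ →₀ ℕ} (hs : s ∈ g.support) : p ∣ s i := by
  rcases Nat.eq_zero_or_pos (s i) with h0 | hpos
  · exact h0 ▸ dvd_zero p
  have hsub : s - Finsupp.single i 1 + Finsupp.single i 1 = s :=
    tsub_add_cancel_of_le (Finsupp.single_le_iff.mpr hpos)
  have hcoeff := congrArg (MvPolynomial.coeff (s - Finsupp.single i 1)) hg
  rw [MvPolynomial.coeff_pderiv, hsub, MvPolynomial.coeff_zero, ← Nat.cast_succ,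
    Finsupp.tsub_apply, Finsupp.single_eq_same, Nat.succ_eq_add_one, Nat.sub_add_cancel hpos]
    at hcoeff
  exact (CharP.cast_eq_zero_iff R p _).mp
    ((mul_eq_zero.mp hcoeff).resolve_left (MvPolynomial.mem_support_iff.mp hs))

theorem exists_pow_eq_of_forall_pderiv_eq_zero (p : ℕ) [Fact p.Prime] [CharP R p]
    [PerfectRing R p] (hg : ∀ i, MvPolynomial.pderiv i g = 0) : ∃ h, h ^ p = g := by
  refine ⟨∑ s ∈ g.support, MvPolynomial.monomial (s.mapRange (· / p) (Nat.zero_div p))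
    ((frobeniusEquiv R p).symm (g.coeff s)), ?_⟩
  rw [sum_pow_char]
  conv_rhs => rw [g.as_sum]
  refine Finset.sum_congr rfl fun s hs => ?_
  rw [MvPolynomial.monomial_pow, frobeniusEquiv_symm_pow_p]
  congr 2
  ext i
  simp [Nat.mul_div_cancel' (dvd_of_mem_support_of_pderiv_eq_zero p (hg i) hs)]

theorem exists_pderiv_ne_zero (p : ℕ) [Fact p.Prime] [CharP R p] [PerfectRing R p]
    (hg : Irreducible g) : ∃ i, MvPolynomial.pderiv i g ≠ 0 := by
  by_contra! h
  obtain ⟨r, hr⟩ := exists_pow_eq_of_forall_pderiv_eq_zero p h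
  exact not_irreducible_pow (Fact.out : p.Prime).one_lt.ne' (hr ▸ hg)

end PartialDerivatives

section FiniteFieldPoints

theorem exists_forall_ge_exists_eval_mvPolynomial {k : Type*} [Field k] [IsAlgClosed k]
    (p : ℕ) [Fact p.Prime] [CharP k p] (hk : ∀ x : k, ∃ s, s ≠ 0 ∧ x ^ p ^ s = x)
    {g B : MvPolynomial (Fin 3) k} (hg : Irreducible g) (hgB : ¬ g ∣ B) :
    ∃ N₀ : ℕ, ∀ N ≥ N₀, MvPolynomial.map (iterateFrobenius k p N) g = g →
      ∃ P : Fin 3 → k, (∀ i, P i ^ p ^ N = P i) ∧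
        MvPolynomial.eval P g = 0 ∧ MvPolynomial.eval P B ≠ 0 := by
  obtain ⟨v, hv⟩ := exists_pderiv_ne_zero p hg
  let e : Equiv.Perm (Fin 3) := Equiv.swap 0 v
  let T := (MvPolynomial.renameEquiv k e).trans (trivariateEquiv k)
  have hderiv : derivative (T g) ≠ 0 := by
    have h : derivative (T g) = T (MvPolynomial.pderiv v g) := by
      simp only [T, AlgEquiv.trans_apply, MvPolynomial.renameEquiv_apply,
        ← trivariateEquiv_pderiv_zero, ← MvPolynomial.pderiv_rename e.injective, e,
        Equiv.swap_apply_right]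
    simpa [h] using hv
  obtain ⟨N₀, hN₀⟩ := exists_forall_ge_exists_eval_eq_zero_eval_ne_zero p hk
    ((MulEquiv.irreducible_iff T).mpr hg) hderiv (by rwa [map_dvd_iff T] : ¬ T g ∣ T B)
  refine ⟨N₀, fun N hN hfix => ?_⟩
  obtain ⟨x, z, y, hx, hz, hy, hg0, hB0⟩ := hN₀ N hN (by
    simp only [T, AlgEquiv.trans_apply, MvPolynomial.renameEquiv_apply, ← trivariateEquiv_map,
      MvPolynomial.map_rename, hfix])
  simp only [T, AlgEquiv.trans_apply, MvPolynomial.renameEquiv_apply,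
    eval_map_evalEvalRingHom_trivariateEquiv, MvPolynomial.eval_rename] at hg0 hB0
  have hP : ∀ j : Fin 3, ![y, x, z] j ^ p ^ N = ![y, x, z] j := by
    simp [Fin.forall_fin_succ, hx, hy, hz]
  exact ⟨_, fun i => hP (e i), hg0, hB0⟩

theorem exists_pow_pow_eq_self_of_isAlgebraic {K Ω : Type*} [Field K] [Finite K] [Field Ω]
    [Algebra K Ω] [Algebra.IsAlgebraic K Ω] (p : ℕ) [CharP K p] (x : Ω) :
    ∃ s, s ≠ 0 ∧ x ^ p ^ s = x := by
  let E := IntermediateField.adjoin K {x}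
  have : FiniteDimensional K E :=
    IntermediateField.adjoin.finiteDimensional (Algebra.IsIntegral.isIntegral x)
  have : Finite E := Module.finite_of_finite K
  have := Fintype.ofFinite E
  have : CharP E p := charP_of_injective_algebraMap (algebraMap K E).injective p
  obtain ⟨s, -, hs⟩ := FiniteField.card E p
  have hx := FiniteField.pow_card (⟨x, IntermediateField.mem_adjoin_simple_self K x⟩ : E)
  exact ⟨s, s.ne_zero, congrArg Subtype.val (hs ▸ hx)⟩

theorem mem_range_of_pow_card_eq_self {L Ω : Type*} [Field L] [Fintype L] [Field Ω]
    (φ : L →+* Ω) {x : Ω} (hx : x ^ Fintype.card L = x) : x ∈ Set.range φ := by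
  have hsplits : (X ^ Fintype.card L - X : L[X]).Splits := by
    rw [splits_iff_card_roots, FiniteField.roots_X_pow_card_sub_X,
      FiniteField.X_pow_card_sub_X_natDegree_eq L Fintype.one_lt_card, ← Finset.card_def,
      Finset.card_univ]
  refine hsplits.mem_range_of_isRoot (FiniteField.X_pow_card_sub_X_ne_zero L Fintype.one_lt_card) ?_
  simp [hx]

theorem exists_forall_ge_exists_aeval_mvPolynomial {K : Type*} [Field K] [Fintype K]
    {g B : MvPolynomial (Fin 3) K}
    (hg : Irreducible (MvPolynomial.map (algebraMap K (AlgebraicClosure K)) g))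
    (hgB : ¬ MvPolynomial.map (algebraMap K (AlgebraicClosure K)) g ∣
      MvPolynomial.map (algebraMap K (AlgebraicClosure K)) B) :
    ∃ r₀ : ℕ, ∀ r ≥ r₀, ∀ (L : Type*) [Field L] [Fintype L] [Algebra K L],
      Fintype.card L = Fintype.card K ^ r →
        ∃ P : Fin 3 → L, MvPolynomial.aeval P g = 0 ∧ MvPolynomial.aeval P B ≠ 0 := by
  let Ω := AlgebraicClosure K
  obtain ⟨p, _⟩ := CharP.exists K
  obtain ⟨a, hp, hcard⟩ := FiniteField.card K p
  have : Fact p.Prime := ⟨hp⟩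
  have : CharP Ω p := charP_of_injective_algebraMap (algebraMap K Ω).injective p
  obtain ⟨r₀, hr₀⟩ := exists_forall_ge_exists_eval_mvPolynomial p
    (exists_pow_pow_eq_self_of_isAlgebraic (K := K) p) hg hgB
  refine ⟨r₀, fun r hr L _ _ _ hL => ?_⟩
  have hpow : p ^ (a * r) = Fintype.card L := by rw [hL, hcard, pow_mul]
  have hfix : (iterateFrobenius Ω p (a * r)).comp (algebraMap K Ω) = algebraMap K Ω := by
    ext c
    rw [RingHom.comp_apply, iterateFrobenius_def, ← map_pow, hpow, hL, FiniteField.pow_card_pow]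
  obtain ⟨P, hP, hPg, hPB⟩ := hr₀ (a * r) (hr.trans (Nat.le_mul_of_pos_left r a.pos))
    (by rw [MvPolynomial.map_map, hfix])
  let φ : L →ₐ[K] Ω := IsAlgClosed.lift
  choose Q hQ using fun i => mem_range_of_pow_card_eq_self φ.toRingHom (hpow ▸ hP i)
  have heval (F : MvPolynomial (Fin 3) K) :
      MvPolynomial.eval P (MvPolynomial.map (algebraMap K Ω) F) = φ (MvPolynomial.aeval Q F) := by
    rw [← MvPolynomial.aeval_eq_eval, MvPolynomial.aeval_map_algebraMap,
      MvPolynomial.comp_aeval_apply]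
    exact congrArg (MvPolynomial.aeval · F) (funext hQ).symm
  exact ⟨Q, φ.injective ((heval g).symm.trans (hPg.trans (map_zero φ).symm)),
    fun h => hPB (by rw [heval, h, map_zero])⟩

end FiniteFieldPoints

section SecondDifference

variable {R : Type*} [CommRing R]

/-- The polynomial `f(X₀) - f(X₁) - f(X₂) + f(-X₀ + X₁ + X₂)`; its zeros off the planes `X₀ = X₁`
and `X₀ = X₂` are the failures of planarity of `f`. -/
noncomputable def secondDifference (f : R[X]) : MvPolynomial (Fin 3) R :=
  aeval (MvPolynomial.X 0) f - aeval (MvPolynomial.X 1) f - aeval (MvPolynomial.X 2) f +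
    aeval (-MvPolynomial.X 0 + MvPolynomial.X 1 + MvPolynomial.X 2) f

theorem aeval_secondDifference {A : Type*} [CommRing A] [Algebra R A] (f : R[X]) (P : Fin 3 → A) :
    MvPolynomial.aeval P (secondDifference f) =
      aeval (P 0) f - aeval (P 1) f - aeval (P 2) f + aeval (-P 0 + P 1 + P 2) f := by
  simp [secondDifference, ← Polynomial.aeval_algHom_apply]

theorem map_secondDifference {S : Type*} [CommRing S] (φ : R →+* S) (f : R[X]) :
    MvPolynomial.map φ (secondDifference f) = secondDifference (f.map φ) := by
  have h (x : MvPolynomial (Fin 3) R) :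
      MvPolynomial.map φ (aeval x f) = aeval (MvPolynomial.map φ x) (f.map φ) := by
    simp [aeval_def, hom_eval₂, eval₂_map, MvPolynomial.algebraMap_eq, ← MvPolynomial.map_comp_C]
  simp [secondDifference, h]

theorem eval_pderiv_zero_secondDifference (f : R[X]) (P : Fin 3 → R) :
    MvPolynomial.eval P (MvPolynomial.pderiv 0 (secondDifference f)) =
      (derivative f).eval (P 0) - (derivative f).eval (-P 0 + P 1 + P 2) := by
  have h (x : MvPolynomial (Fin 3) R) :
      MvPolynomial.eval P (aeval x (derivative f)) =
        (derivative f).eval (MvPolynomial.eval P x) := by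
    rw [← MvPolynomial.aeval_eq_eval, ← Polynomial.aeval_algHom_apply]
    rfl
  simp [secondDifference, Derivation.map_aeval, h, MvPolynomial.pderiv_X, sub_eq_add_neg]

theorem eval_pderiv_eq_zero_of_sq_dvd {σ : Type*} {ℓ F : MvPolynomial σ R} {P : σ → R}
    (h : ℓ ^ 2 ∣ F) (hP : MvPolynomial.eval P ℓ = 0) (i : σ) :
    MvPolynomial.eval P (MvPolynomial.pderiv i F) = 0 := by
  obtain ⟨Q, rfl⟩ := h
  simp [pow_two, hP]

theorem derivative_eq_C_of_sq_dvd_secondDifference [IsDomain R] [Infinite R] {f : R[X]} {i : Fin 2}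
    (h : (MvPolynomial.X 0 - MvPolynomial.X i.succ) ^ 2 ∣ secondDifference f) :
    derivative f = C ((derivative f).eval 0) := by
  refine Polynomial.funext fun a => ?_
  let P : Fin 3 → R := ![a, if i = 0 then a else 0, if i = 1 then a else 0]
  have hP : MvPolynomial.eval P (MvPolynomial.X 0 - MvPolynomial.X i.succ) = 0 := by
    fin_cases i <;> simp [P]
  have hP' : -P 0 + P 1 + P 2 = 0 := by fin_cases i <;> simp [P]
  have hderiv := eval_pderiv_eq_zero_of_sq_dvd h hP 0
  rw [eval_pderiv_zero_secondDifference, hP', sub_eq_zero] at hderiv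
  rw [eval_C]
  exact hderiv

theorem irreducible_X_zero_sub_X_succ [IsDomain R] {n : ℕ} (i : Fin n) :
    Irreducible (MvPolynomial.X 0 - MvPolynomial.X i.succ : MvPolynomial (Fin (n + 1)) R) := by
  rw [← MulEquiv.irreducible_iff (MvPolynomial.finSuccEquiv R n), map_sub,
    MvPolynomial.finSuccEquiv_X_zero, MvPolynomial.finSuccEquiv_X_succ]
  exact irreducible_X_sub_C _

end SecondDifference

theorem not_exists_derivative_map_eq_C {R S : Type*} [CommRing R] [CommRing S] {φ : R →+* S}
    (hφ : Function.Injective φ) {f : R[X]} (hf : ¬ ∃ c, derivative f = C c) :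
    ¬ ∃ c, derivative (f.map φ) = C c := by
  rintro ⟨c, hc⟩
  refine hf ⟨_, eq_C_of_natDegree_eq_zero ?_⟩
  rw [← natDegree_map_eq_of_injective hφ, ← derivative_map, hc, natDegree_C]

theorem not_dvd_of_mul_eq_secondDifference {k : Type*} [Field k] [Infinite k] {f : k[X]}
    (hf : ¬ ∃ c, derivative f = C c) {g G : MvPolynomial (Fin 3) k} (hg : Irreducible g)
    (hgG : g ∣ G) (hG : (MvPolynomial.X 0 - MvPolynomial.X 1) *
      (MvPolynomial.X 0 - MvPolynomial.X 2) * G = secondDifference f) :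
    ¬ g ∣ (MvPolynomial.X 0 - MvPolynomial.X 1) * (MvPolynomial.X 0 - MvPolynomial.X 2) := by
  intro hdvd
  suffices ∃ i : Fin 2, MvPolynomial.X 0 - MvPolynomial.X i.succ ∣ g by
    obtain ⟨i, hi⟩ := this
    refine hf ⟨_, derivative_eq_C_of_sq_dvd_secondDifference (i := i) ?_⟩
    rw [← hG, pow_two]
    refine mul_dvd_mul ?_ (hi.trans hgG)
    fin_cases i
    · exact dvd_mul_right _ _
    · exact dvd_mul_left _ _
  rcases hg.prime.dvd_or_dvd hdvd with h | h
  · exact ⟨0, hg.dvd_symm (irreducible_X_zero_sub_X_succ 0) h⟩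
  · exact ⟨1, hg.dvd_symm (irreducible_X_zero_sub_X_succ 1) h⟩

theorem not_map_dvd_map_of_mul_eq_secondDifference {K k : Type*} [Field K] [Field k] [Infinite k]
    (φ : K →+* k) {f : K[X]} (hf : ¬ ∃ c, derivative f = C c) {g G : MvPolynomial (Fin 3) K}
    (hg : Irreducible (MvPolynomial.map φ g)) (hgG : g ∣ G)
    (hG : (MvPolynomial.X 0 - MvPolynomial.X 1) *
      (MvPolynomial.X 0 - MvPolynomial.X 2) * G = secondDifference f) :
    ¬ MvPolynomial.map φ g ∣ MvPolynomial.map φ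
      ((MvPolynomial.X 0 - MvPolynomial.X 1) * (MvPolynomial.X 0 - MvPolynomial.X 2)) := by
  have hmap := congrArg (MvPolynomial.map φ) hG
  simp only [map_mul, map_sub, MvPolynomial.map_X, map_secondDifference] at hmap ⊢
  exact not_dvd_of_mul_eq_secondDifference (not_exists_derivative_map_eq_C φ.injective hf) hg
    (map_dvd _ hgG) hmap

theorem IsPlanarOdd.eq_or_eq {F : Type} [Field F] {φ : F → F} (hφ : IsPlanarOdd φ) {x y z : F}
    (h : φ x - φ y - φ z + φ (-x + y + z) = 0) : x = y ∨ x = z := by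
  refine or_iff_not_imp_left.mpr fun hxy => ?_
  have hyz : y = -x + y + z := (hφ (x - y) (sub_ne_zero.mpr hxy)).injective (by
    simp only [add_sub_cancel, show -x + y + z + (x - y) = z by ring]
    linear_combination h)
  linear_combination hyz

theorem exists_field_card_eq_card_pow (K : Type*) [Field K] [Fintype K] {r : ℕ} (hr : r ≠ 0) :
    ∃ (L : Type) (_ : Field L) (_ : Fintype L) (_ : Algebra K L),
      Fintype.card L = Fintype.card K ^ r := by
  obtain ⟨p, _⟩ := CharP.exists K
  have : Fact p.Prime := ⟨CharP.char_is_prime K p⟩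
  have : NeZero r := ⟨hr⟩
  refine ⟨FiniteField.Extension K p r, inferInstance, Fintype.ofFinite _, inferInstance, ?_⟩
  rw [Fintype.card_eq_nat_card, Fintype.card_eq_nat_card, FiniteField.natCard_extension]

theorem not_exceptional_planar_of_abs_irreducible_factor
    (K : Type) [Field K] [Fintype K] (hodd : Odd (Fintype.card K))
    (f : K[X]) (hf : ¬ ∃ c : K, Polynomial.derivative f = C c)
    (G : MvPolynomial (Fin 3) K)
    (hG : (MvPolynomial.X 0 - MvPolynomial.X 1) * (MvPolynomial.X 0 - MvPolynomial.X 2) * G =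
      Polynomial.aeval (MvPolynomial.X 0) f - Polynomial.aeval (MvPolynomial.X 1) f -
        Polynomial.aeval (MvPolynomial.X 2) f +
        Polynomial.aeval (-MvPolynomial.X 0 + MvPolynomial.X 1 + MvPolynomial.X 2) f)
    (hirr : ∃ g : MvPolynomial (Fin 3) K, g ∣ G ∧
      Irreducible (MvPolynomial.map (algebraMap K (AlgebraicClosure K)) g)) :
    ¬ IsExceptionalPlanarOdd f := by
  intro hexc
  change _ = secondDifference f at hG
  obtain ⟨g, hgG, hg⟩ := hirr
  obtain ⟨r₀, hr₀⟩ := exists_forall_ge_exists_aeval_mvPolynomial hg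
    (not_map_dvd_map_of_mul_eq_secondDifference _ hf hg hgG hG)
  obtain ⟨r, ⟨hr, hplanar⟩, hr₀r⟩ := hexc.exists_gt r₀
  obtain ⟨L, _, _, _, hL⟩ := exists_field_card_eq_card_pow K hr.ne'
  obtain ⟨P, hPg, hPdiag⟩ := hr₀ r hr₀r.le L hL
  have hPG : MvPolynomial.aeval P G = 0 :=
    zero_dvd_iff.mp (hPg ▸ map_dvd (MvPolynomial.aeval P) hgG)
  have hP : MvPolynomial.aeval P (secondDifference f) = 0 := by rw [← hG, map_mul, hPG, mul_zero]
  rw [aeval_secondDifference] at hP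
  rcases (hplanar L hL).eq_or_eq hP with h | h <;> exact hPdiag (by simp [h])
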